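/- arXiv:2604.01875 — 2 statements merged into one kernel-verified Lean document; each statement's English description precedes it below -/
import Mathlib

section
/- Let (M,d) be a pointed metric space with base point 0 and let c ≥ 1. Then the following are equivalent: (i) for every bounded subset A ⊆ M with 0 ∈ A (regarded as a pointed metric space with the induced metric), every sequence (μ_n) of finitely supported functions μ_n : A → ℝ with sup_n ‖μ_n‖ < ∞ satisfies ca(μ_n) ≤ c·de(μ_n) (all quantities computed over A); (ii) every sequence (μ_n) of finitely supported functions μ_n : M → ℝ with sup_n ‖μ_n‖ < ∞ satisfies ca(μ_n) ≤ c·de(μ_n) (computed over M). (This expresses the statement: F(M) is c-Schur if and only if F(A) is c-Schur for each bounded subset A ⊆ M.) -/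
open scoped BigOperators

/-- The free norm of a finitely supported function `μ : M → ℝ` over a pointed metric
space `(M, z)`. -/
noncomputable def freeNorm {M : Type*} [MetricSpace M] (z : M) (μ : M →₀ ℝ) : ℝ :=
  sSup {s | ∃ f : M → ℝ, f z = 0 ∧ LipschitzWith 1 f ∧ s = ∑ x ∈ μ.support, μ x * f x}

/-- `ca(μ_n) = inf_n sup {‖μ_k - μ_l‖ : k, l ≥ n}` computed with the free norm. -/
noncomputable def seqCa {M : Type*} [MetricSpace M] (z : M) (μ : ℕ → M →₀ ℝ) : ℝ :=
  sInf {t | ∃ n : ℕ, t = sSup {s | ∃ k, n ≤ k ∧ ∃ l, n ≤ l ∧ s = freeNorm z (μ k - μ l)}}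

/-- `de(μ_n) = sup_f inf_n sup {|⟨μ_k - μ_l, f⟩| : k, l ≥ n}` over `1`-Lipschitz `f`
vanishing at the base point. -/
noncomputable def seqDe {M : Type*} [MetricSpace M] (z : M) (μ : ℕ → M →₀ ℝ) : ℝ :=
  sSup {t | ∃ f : M → ℝ, f z = 0 ∧ LipschitzWith 1 f ∧
    t = sInf {u | ∃ n : ℕ, u = sSup {s | ∃ k, n ≤ k ∧ ∃ l, n ≤ l ∧
      s = |∑ x ∈ (μ k - μ l).support, (μ k - μ l) x * f x|}}}

/-!
The `c`-Schur property is equivalent to the following statement about single terms: every bounded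
sequence has infinitely many terms that are normed, up to the factor `c` and a given error, by one
functional. In one direction, apply the property to `w 0, -w 0, w 1, -w 1, …`, whose differences
contain every `2 • w n`.

Let `w` be a bounded sequence in `F(M)`. Functionals living on disjoint annuli around `z` add up to
a functional of controlled norm, so some radius `R` admits, for each `S ≥ R`, infinitely many terms
with little mass between the distances `R` and `2 * S`. Passing to a subsequence, each term is the
sum of a part in a fixed ball, a negligible part, and a part so far out that it is separated from
the ball and from all previous terms. The hypothesis on the ball yields one functional norming the
first parts; each far part is normed by a functional of its own, with sign chosen so that the two
values do not cancel. Since `|f x| ≤ dist x z`, functions on such well separated sets glue to a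
`(1 + e)`-Lipschitz function, which is extended to `M` by McShane's theorem.
-/

open Filter Function Set
open scoped NNReal

section Pairing

variable {M N : Type*}

/-- The duality `⟨μ, f⟩ = ∑ x, μ x * f x` between finitely supported functions and functions. -/
noncomputable def pairing : (M →₀ ℝ) →ₗ[ℝ] (M → ℝ) →ₗ[ℝ] ℝ :=
  (Finsupp.bilinearCombination ℝ ℝ).flip

theorem pairing_apply (μ : M →₀ ℝ) (f : M → ℝ) : pairing μ f = ∑ x ∈ μ.support, μ x * f x :=
  rfl

theorem pairing_congr {μ : M →₀ ℝ} {f g : M → ℝ} (h : ∀ x ∈ μ.support, f x = g x) :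
    pairing μ f = pairing μ g := by
  rw [pairing_apply, pairing_apply]
  exact Finset.sum_congr rfl fun x hx => by rw [h x hx]

theorem mem_support_pointwise_smul {θ : M → ℝ} {μ : M →₀ ℝ} {x : M} :
    x ∈ (θ • μ).support ↔ θ x ≠ 0 ∧ x ∈ μ.support := by
  rw [Finsupp.mem_support_iff, Finsupp.mem_support_iff, Finsupp.coe_pointwise_smul]
  exact mul_ne_zero_iff

theorem pairing_pointwise_smul (θ : M → ℝ) (μ : M →₀ ℝ) (f : M → ℝ) :
    pairing (θ • μ) f = pairing μ (θ * f) := by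
  have hsupp : (θ • μ).support ⊆ μ.support := fun x hx => (mem_support_pointwise_smul.1 hx).2
  rw [pairing_apply, pairing_apply, Finset.sum_subset hsupp fun x _ hx => by
    rw [Finsupp.notMem_support_iff.1 hx, zero_mul]]
  refine Finset.sum_congr rfl fun x _ => ?_
  rw [Finsupp.coe_pointwise_smul, Pi.smul_apply', Pi.mul_apply, smul_eq_mul]
  ring

theorem pairing_mapDomain (ι : N → M) (ν : N →₀ ℝ) (f : M → ℝ) :
    pairing (ν.mapDomain ι) f = pairing ν (f ∘ ι) :=
  Finsupp.linearCombination_mapDomain ℝ ι ν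

end Pairing

section LipBall

variable {M N : Type*} [PseudoMetricSpace M] [PseudoMetricSpace N] {z : M} {K L : ℝ≥0}
  {f g : M → ℝ}

/-- The ball of radius `K` of `Lip₀(M)`: the `K`-Lipschitz functions vanishing at `z`. -/
def lipBall (z : M) (K : ℝ≥0) : Set (M → ℝ) :=
  {f | f z = 0 ∧ LipschitzWith K f}

theorem abs_le_of_mem_lipBall (hf : f ∈ lipBall z K) (x : M) : |f x| ≤ K * dist x z := by
  simpa only [Real.dist_eq, hf.1, sub_zero] using hf.2.dist_le_mul x z

theorem zero_mem_lipBall : (0 : M → ℝ) ∈ lipBall z K :=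
  ⟨rfl, (LipschitzWith.const 0).weaken K.2⟩

theorem neg_mem_lipBall (hf : f ∈ lipBall z K) : -f ∈ lipBall z K :=
  ⟨by rw [Pi.neg_apply, hf.1, neg_zero], hf.2.neg⟩

theorem sub_mem_lipBall (hf : f ∈ lipBall z K) (hg : g ∈ lipBall z L) :
    f - g ∈ lipBall z (K + L) :=
  ⟨by rw [Pi.sub_apply, hf.1, hg.1, sub_zero], hf.2.sub hg.2⟩

theorem inv_smul_mem_lipBall_one (hf : f ∈ lipBall z K) : (K : ℝ)⁻¹ • f ∈ lipBall z 1 := by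
  refine ⟨by rw [Pi.smul_apply, hf.1, smul_zero],
    ((lipschitzWith_smul (K : ℝ)⁻¹).comp hf.2).weaken ?_⟩
  rw [nnnorm_inv, NNReal.nnnorm_eq]
  exact inv_mul_le_one

theorem comp_isometry_mem_lipBall {ι : N → M} (hι : Isometry ι) {z : N}
    (hf : f ∈ lipBall (ι z) K) : f ∘ ι ∈ lipBall z K :=
  ⟨hf.1, by simpa only [mul_one] using hf.2.comp hι.lipschitz⟩

theorem exists_mem_lipBall_comp_isometry_eq {ι : N → M} (hι : Isometry ι) (hinj : Injective ι)
    {z : N} {f : N → ℝ} (hf : f ∈ lipBall z K) : ∃ g ∈ lipBall (ι z) K, g ∘ ι = f := by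
  have hext : LipschitzOnWith K (extend ι f 0) (range ι) := by
    rintro _ ⟨x, rfl⟩ _ ⟨y, rfl⟩
    rw [hinj.extend_apply, hinj.extend_apply, hι.edist_eq]
    exact hf.2 x y
  obtain ⟨g, hg, hgf⟩ := hext.extend_real
  have hgι (x : N) : g (ι x) = f x := by rw [← hgf (mem_range_self x), hinj.extend_apply]
  exact ⟨g, ⟨(hgι z).trans hf.1, hg⟩, funext hgι⟩

end LipBall

section Gluing

variable {M : Type*} [PseudoMetricSpace M]

theorem exists_lipschitzWith_eqOn_of_dist_le {ι : Type*} {G : ι → M → ℝ} {D : ι → Set M} {K : ℝ≥0}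
    (h : ∀ i j, ∀ x ∈ D i, ∀ y ∈ D j, dist (G i x) (G j y) ≤ K * dist x y) :
    ∃ F, LipschitzWith K F ∧ ∀ i, EqOn F (G i) (D i) := by
  classical
  let F₀ : M → ℝ := fun x => if hx : ∃ i, x ∈ D i then G hx.choose x else 0
  have hF₀ (i : ι) : EqOn F₀ (G i) (D i) := fun x hx => by
    have hex : ∃ i, x ∈ D i := ⟨i, hx⟩
    have hle := h _ i x hex.choose_spec x hx
    rw [dist_self, mul_zero] at hle
    simpa only [F₀, dif_pos hex] using dist_le_zero.1 hle
  have hlip : LipschitzOnWith K F₀ (⋃ i, D i) := LipschitzOnWith.of_dist_le_mul fun x hx y hy => by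
    obtain ⟨i, hi⟩ := mem_iUnion.1 hx
    obtain ⟨j, hj⟩ := mem_iUnion.1 hy
    rw [hF₀ i hi, hF₀ j hj]
    exact h i j x hi y hj
  obtain ⟨F, hF, hFF₀⟩ := hlip.extend_real
  exact ⟨F, hF, fun i x hx => (hFF₀ (mem_iUnion_of_mem i hx)).symm.trans (hF₀ i hx)⟩

theorem dist_add_dist_le_of_separated {z x y : M} {e : ℝ} (he : 0 ≤ e)
    (h : (2 + e) * dist x z ≤ e * dist y z) : dist x z + dist y z ≤ (1 + e) * dist x y := by
  have htri : dist y z - dist x z ≤ dist x y := by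
    linarith [dist_triangle y x z, dist_comm y x]
  calc dist x z + dist y z ≤ (1 + e) * (dist y z - dist x z) := by linarith
    _ ≤ (1 + e) * dist x y := by gcongr

theorem exists_mem_lipBall_eqOn_of_separated {ι : Type*} [LinearOrder ι] {z : M} {K e : ℝ≥0}
    {G : ι → M → ℝ} {D : ι → Set M} (hG : ∀ i, G i ∈ lipBall z K) (hz : ∃ i, z ∈ D i)
    (hD : ∀ i j, i < j → ∀ x ∈ D i, ∀ y ∈ D j, (2 + e) * dist x z ≤ e * dist y z) :
    ∃ F ∈ lipBall z ((1 + e) * K), ∀ i, EqOn F (G i) (D i) := by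
  have hlt : ∀ i j, i < j → ∀ x ∈ D i, ∀ y ∈ D j,
      dist (G i x) (G j y) ≤ ((1 + e) * K : ℝ≥0) * dist x y := fun i j hij x hx y hy =>
    calc dist (G i x) (G j y) ≤ |G i x| + |G j y| := abs_sub _ _
      _ ≤ K * dist x z + K * dist y z :=
        add_le_add (abs_le_of_mem_lipBall (hG i) x) (abs_le_of_mem_lipBall (hG j) y)
      _ = K * (dist x z + dist y z) := by ring
      _ ≤ K * ((1 + e) * dist x y) := by
        gcongr
        exact dist_add_dist_le_of_separated e.2 (hD i j hij x hx y hy)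
      _ = ((1 + e) * K : ℝ≥0) * dist x y := by push_cast; ring
  have hle : ∀ i j, ∀ x ∈ D i, ∀ y ∈ D j,
      dist (G i x) (G j y) ≤ ((1 + e) * K : ℝ≥0) * dist x y := fun i j x hx y hy => by
    rcases lt_trichotomy i j with hij | rfl | hji
    · exact hlt i j hij x hx y hy
    · exact ((hG i).2.weaken (le_mul_of_one_le_left K.2 le_self_add)).dist_le_mul x y
    · rw [dist_comm, dist_comm x]
      exact hlt j i hji y hy x hx
  obtain ⟨F, hF, hFG⟩ := exists_lipschitzWith_eqOn_of_dist_le hle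
  obtain ⟨i, hzi⟩ := hz
  exact ⟨F, ⟨(hFG i hzi).trans (hG i).1, hF⟩, hFG⟩

theorem exists_mem_lipBall_eqOn_closedBall_and_far {ι : Type*} [LinearOrder ι] {z : M} {e : ℝ≥0}
    {r : ℝ} (hr : 0 ≤ r) {f : M → ℝ} (hf : f ∈ lipBall z 1) {g : ι → M → ℝ}
    (hg : ∀ i, g i ∈ lipBall z 1) {E : ι → Set M} {S : ι → ℝ} (hrS : ∀ i, (2 + e) * r ≤ e * S i)
    (hES : ∀ i j, i < j → ∀ x ∈ E i, (2 + e) * dist x z ≤ e * S j) :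
    ∃ F ∈ lipBall z (1 + e), EqOn F f (Metric.closedBall z r) ∧
      ∀ i, EqOn F (g i) {x ∈ E i | S i ≤ dist x z} := by
  let G : WithBot ι → M → ℝ := WithBot.recBotCoe f g
  let D : WithBot ι → Set M :=
    WithBot.recBotCoe (Metric.closedBall z r) fun i => {x ∈ E i | S i ≤ dist x z}
  have hG (i : WithBot ι) : G i ∈ lipBall z 1 := by
    cases i with
    | bot => exact hf
    | coe i => exact hg i
  have hD : ∀ i j, i < j → ∀ x ∈ D i, ∀ y ∈ D j, (2 + e) * dist x z ≤ e * dist y z := by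
    intro i j hij x hx y hy
    cases j with
    | bot => exact absurd hij not_lt_bot
    | coe j =>
      have hSy : e * S j ≤ e * dist y z := by
        gcongr
        exact hy.2
      cases i with
      | bot =>
        refine le_trans ?_ ((hrS j).trans hSy)
        gcongr
        exact hx
      | coe i => exact (hES i j (WithBot.coe_lt_coe.1 hij) x hx.1).trans hSy
  obtain ⟨F, hF, hFG⟩ :=
    exists_mem_lipBall_eqOn_of_separated hG ⟨⊥, Metric.mem_closedBall_self hr⟩ hD
  rw [mul_one] at hF
  exact ⟨F, hF, hFG ⊥, fun i => hFG i⟩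

-- At two given points at most two of the functions are nonzero.
theorem lipschitzWith_sum_of_pairwiseDisjoint_support {ι E : Type*} [SeminormedAddCommGroup E]
    {s : Finset ι} {G : ι → M → E} {K : ℝ≥0} (hG : ∀ i ∈ s, LipschitzWith K (G i))
    (hd : (s : Set ι).PairwiseDisjoint fun i => support (G i)) :
    LipschitzWith (2 * K) (∑ i ∈ s, G i) := by
  classical
  have hcard (x : M) : (s.filter fun i => G i x ≠ 0).card ≤ 1 := by
    refine Finset.card_le_one.2 fun i hi j hj => ?_
    rw [Finset.mem_filter] at hi hj
    exact hd.elim_set hi.1 hj.1 x hi.2 hj.2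
  refine LipschitzWith.of_dist_le_mul fun x y => ?_
  let t := s.filter fun i => G i x ≠ 0 ∨ G i y ≠ 0
  have ht : t.card ≤ 2 := by
    simp only [t, Finset.filter_or]
    exact (Finset.card_union_le _ _).trans (add_le_add (hcard x) (hcard y))
  rw [Finset.sum_apply, Finset.sum_apply]
  calc dist (∑ i ∈ s, G i x) (∑ i ∈ s, G i y) ≤ ∑ i ∈ s, dist (G i x) (G i y) :=
        dist_sum_sum_le _ _ _
    _ = ∑ i ∈ t, dist (G i x) (G i y) := by
        refine (Finset.sum_filter_of_ne fun i _ hne => ?_).symm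
        contrapose! hne
        rw [hne.1, hne.2, dist_self]
    _ ≤ ∑ _i ∈ t, K * dist x y :=
        Finset.sum_le_sum fun i hi => (hG i (Finset.mem_filter.1 hi).1).dist_le_mul x y
    _ = t.card * (K * dist x y) := by rw [Finset.sum_const, nsmul_eq_mul]
    _ ≤ 2 * (K * dist x y) := by
        gcongr
        exact_mod_cast ht
    _ = (2 * K : ℝ≥0) * dist x y := by push_cast; ring

end Gluing

section FreeNorm

variable {M N : Type*} [MetricSpace M] [MetricSpace N] {z : M} {K : ℝ≥0} {f : M → ℝ} {C : ℝ}

theorem isLUB_freeNorm (z : M) (μ : M →₀ ℝ) : IsLUB (pairing μ '' lipBall z 1) (freeNorm z μ) := by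
  have hset : {s | ∃ f : M → ℝ, f z = 0 ∧ LipschitzWith 1 f ∧ s = ∑ x ∈ μ.support, μ x * f x} =
      pairing μ '' lipBall z 1 := by
    ext s
    exact ⟨fun ⟨f, hz, hf, hs⟩ => ⟨f, ⟨hz, hf⟩, hs.symm⟩,
      fun ⟨f, ⟨hz, hf⟩, hs⟩ => ⟨f, hz, hf, hs.symm⟩⟩
  rw [freeNorm, hset]
  refine isLUB_csSup ⟨_, mem_image_of_mem _ zero_mem_lipBall⟩
    ⟨∑ x ∈ μ.support, |μ x| * dist x z, forall_mem_image.2 fun f hf => ?_⟩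
  rw [pairing_apply]
  refine Finset.sum_le_sum fun x _ => ?_
  calc μ x * f x ≤ |μ x| * |f x| := (le_abs_self _).trans_eq (abs_mul _ _)
    _ ≤ |μ x| * dist x z := by
      gcongr
      simpa only [NNReal.coe_one, one_mul] using abs_le_of_mem_lipBall hf x

theorem freeNorm_le_iff {μ : M →₀ ℝ} :
    freeNorm z μ ≤ C ↔ ∀ f ∈ lipBall z 1, pairing μ f ≤ C :=
  (isLUB_le_iff (isLUB_freeNorm z μ)).trans forall_mem_image

theorem lt_freeNorm_iff {μ : M →₀ ℝ} :
    C < freeNorm z μ ↔ ∃ f ∈ lipBall z 1, C < pairing μ f :=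
  (lt_isLUB_iff (isLUB_freeNorm z μ)).trans exists_mem_image

theorem pairing_le_freeNorm (μ : M →₀ ℝ) (hf : f ∈ lipBall z 1) : pairing μ f ≤ freeNorm z μ :=
  freeNorm_le_iff.1 le_rfl f hf

theorem abs_pairing_le_freeNorm (μ : M →₀ ℝ) (hf : f ∈ lipBall z 1) :
    |pairing μ f| ≤ freeNorm z μ :=
  abs_le'.2 ⟨pairing_le_freeNorm μ hf, by
    simpa only [map_neg] using pairing_le_freeNorm μ (neg_mem_lipBall hf)⟩

theorem abs_pairing_le (μ : M →₀ ℝ) (hf : f ∈ lipBall z K) :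
    |pairing μ f| ≤ K * freeNorm z μ := by
  rcases eq_zero_or_pos K with rfl | hK
  · have hf0 : f = 0 := funext fun x => by
      simpa only [NNReal.coe_zero, zero_mul, abs_nonpos_iff, Pi.zero_apply] using
        abs_le_of_mem_lipBall hf x
    rw [hf0, map_zero, abs_zero, NNReal.coe_zero, zero_mul]
  · have h := abs_pairing_le_freeNorm μ (inv_smul_mem_lipBall_one hf)
    rwa [map_smul, smul_eq_mul, abs_mul, abs_of_nonneg (inv_nonneg.2 K.coe_nonneg),
      inv_mul_le_iff₀ (NNReal.coe_pos.2 hK)] at h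

/-- `freeNorm` bundled as a seminorm. It is not a norm, since multiples of the Dirac mass at the
base point have free norm `0`. -/
noncomputable def freeSeminorm (z : M) : Seminorm ℝ (M →₀ ℝ) :=
  Seminorm.ofSMulLE (freeNorm z)
    (le_antisymm (freeNorm_le_iff.2 fun f _ => by rw [map_zero, LinearMap.zero_apply])
      (by simpa only [map_zero, LinearMap.zero_apply] using
        pairing_le_freeNorm (z := z) 0 zero_mem_lipBall))
    (fun μ ν => freeNorm_le_iff.2 fun f hf => by
      rw [map_add, LinearMap.add_apply]
      exact add_le_add (pairing_le_freeNorm μ hf) (pairing_le_freeNorm ν hf))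
    (fun a μ => freeNorm_le_iff.2 fun f hf => by
      rw [map_smul, LinearMap.smul_apply, smul_eq_mul, Real.norm_eq_abs]
      calc a * pairing μ f ≤ |a| * |pairing μ f| := (le_abs_self _).trans_eq (abs_mul _ _)
        _ ≤ |a| * freeNorm z μ := by
          gcongr
          exact abs_pairing_le_freeNorm μ hf)

theorem freeNorm_nonneg (z : M) (μ : M →₀ ℝ) : 0 ≤ freeNorm z μ :=
  apply_nonneg (freeSeminorm z) μ

theorem freeNorm_add_le (z : M) (μ ν : M →₀ ℝ) :
    freeNorm z (μ + ν) ≤ freeNorm z μ + freeNorm z ν :=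
  map_add_le_add (freeSeminorm z) μ ν

theorem freeNorm_sub_le (z : M) (μ ν : M →₀ ℝ) :
    freeNorm z (μ - ν) ≤ freeNorm z μ + freeNorm z ν :=
  map_sub_le_add (freeSeminorm z) μ ν

theorem freeNorm_smul (z : M) (a : ℝ) (μ : M →₀ ℝ) : freeNorm z (a • μ) = |a| * freeNorm z μ :=
  map_smul_eq_mul (freeSeminorm z) a μ

theorem freeNorm_mapDomain {ι : N → M} (hι : Isometry ι) (z : N) (ν : N →₀ ℝ) :
    freeNorm (ι z) (ν.mapDomain ι) = freeNorm z ν := by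
  refine le_antisymm (freeNorm_le_iff.2 fun f hf => ?_) (freeNorm_le_iff.2 fun f hf => ?_)
  · rw [pairing_mapDomain]
    exact pairing_le_freeNorm ν (comp_isometry_mem_lipBall hι hf)
  · obtain ⟨g, hg, rfl⟩ := exists_mem_lipBall_comp_isometry_eq hι hι.injective hf
    rw [← pairing_mapDomain]
    exact pairing_le_freeNorm _ hg

theorem exists_mem_lipBall_abs_add_freeNorm_lt (μ : M →₀ ℝ) (a : ℝ) {δ : ℝ} (hδ : 0 < δ) :
    ∃ g ∈ lipBall z 1, |a| + freeNorm z μ - δ < |a + pairing μ g| := by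
  obtain ⟨g, hg, hlt⟩ := lt_freeNorm_iff.1 (sub_lt_self (freeNorm z μ) hδ)
  rcases le_total 0 a with ha | ha
  · refine ⟨g, hg, lt_of_lt_of_le ?_ (le_abs_self _)⟩
    rw [abs_of_nonneg ha]
    linarith
  · refine ⟨-g, neg_mem_lipBall hg, lt_of_lt_of_le ?_ (neg_le_abs _)⟩
    rw [abs_of_nonpos ha, map_neg]
    linarith

theorem freeNorm_pointwise_smul_le {θ : M → ℝ} (hθ : ∀ f ∈ lipBall z 1, θ * f ∈ lipBall z K)
    (μ : M →₀ ℝ) : freeNorm z (θ • μ) ≤ K * freeNorm z μ :=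
  freeNorm_le_iff.2 fun f hf => by
    rw [pairing_pointwise_smul]
    exact (le_abs_self _).trans (abs_pairing_le μ (hθ f hf))

theorem sum_freeNorm_pointwise_smul_le {ι : Type*} {s : Finset ι} {θ : ι → M → ℝ}
    (hθ : ∀ i ∈ s, ∀ f ∈ lipBall z 1, θ i * f ∈ lipBall z K)
    (hd : (s : Set ι).PairwiseDisjoint fun i => support (θ i)) (μ : M →₀ ℝ) :
    ∑ i ∈ s, freeNorm z (θ i • μ) ≤ 2 * K * freeNorm z μ := by
  refine le_of_forall_pos_le_add fun ε hε => ?_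
  obtain ⟨δ, hδ, hδε⟩ := exists_pos_mul_lt hε s.card
  choose g hg hlt using fun i => lt_freeNorm_iff.1 (sub_lt_self (freeNorm z (θ i • μ)) hδ)
  have hsum : ∑ i ∈ s, θ i * g i ∈ lipBall z (2 * K) :=
    ⟨by
      rw [Finset.sum_apply]
      exact Finset.sum_eq_zero fun i hi => (hθ i hi _ (hg i)).1,
    lipschitzWith_sum_of_pairwiseDisjoint_support (fun i hi => (hθ i hi _ (hg i)).2)
      (hd.mono fun i => support_mul_subset_left (θ i) (g i))⟩
  calc ∑ i ∈ s, freeNorm z (θ i • μ) ≤ ∑ i ∈ s, (pairing μ (θ i * g i) + δ) :=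
        Finset.sum_le_sum fun i _ => by
          rw [← pairing_pointwise_smul]
          linarith [hlt i]
    _ = pairing μ (∑ i ∈ s, θ i * g i) + s.card * δ := by
        rw [Finset.sum_add_distrib, Finset.sum_const, nsmul_eq_mul, map_sum]
    _ ≤ 2 * K * freeNorm z μ + ε :=
        add_le_add ((le_abs_self _).trans (by exact_mod_cast abs_pairing_le μ hsum)) hδε.le

end FreeNorm

section Sequences

theorem sInf_sSup_tails_eq_limsup {α : Type*} [ConditionallyCompleteLattice α] {s : ℕ → ℕ → α}
    {a b : α} (ha : ∀ k l, a ≤ s k l) (hb : ∀ k l, s k l ≤ b) :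
    sInf {t | ∃ n : ℕ, t = sSup {r | ∃ k, n ≤ k ∧ ∃ l, n ≤ l ∧ r = s k l}} =
      limsup (fun p : ℕ × ℕ => s p.1 p.2) atTop := by
  set T : ℕ → Set α := fun n => {r | ∃ k, n ≤ k ∧ ∃ l, n ≤ l ∧ r = s k l}
  have hle (n k l : ℕ) (hk : n ≤ k) (hl : n ≤ l) : s k l ≤ sSup (T n) := by
    refine le_csSup ⟨b, ?_⟩ ⟨k, hk, l, hl, rfl⟩
    rintro _ ⟨k, -, l, -, rfl⟩
    exact hb k l
  have hbdd : BddBelow {t | ∃ n : ℕ, t = sSup (T n)} := by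
    refine ⟨a, ?_⟩
    rintro _ ⟨n, rfl⟩
    exact (ha n n).trans (hle n n n le_rfl le_rfl)
  rw [limsup_eq]
  refine le_antisymm (le_csInf ⟨b, .of_forall fun p => hb p.1 p.2⟩ fun u hu => ?_)
    (le_csInf ⟨_, 0, rfl⟩ ?_)
  · obtain ⟨⟨m, n⟩, hmn⟩ := eventually_atTop.1 hu
    refine csInf_le_of_le hbdd ⟨max m n, rfl⟩ (csSup_le ⟨_, _, le_rfl, _, le_rfl, rfl⟩ ?_)
    rintro _ ⟨k, hk, l, hl, rfl⟩
    exact hmn (k, l) ⟨(le_max_left m n).trans hk, (le_max_right m n).trans hl⟩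
  · rintro _ ⟨n, rfl⟩
    refine csInf_le ⟨a, fun u hu => ?_⟩
      (eventually_atTop.2 ⟨(n, n), fun p hp => hle n p.1 p.2 hp.1 hp.2⟩)
    obtain ⟨p, hp⟩ := Eventually.exists hu
    exact (ha p.1 p.2).trans hp

variable {M : Type*} [MetricSpace M] {z : M} {μ : ℕ → M →₀ ℝ} {f : M → ℝ} {a : ℝ}

theorem exists_forall_freeNorm_sub_le (hμ : ∃ C, ∀ n, freeNorm z (μ n) ≤ C) :
    ∃ B, ∀ k l, freeNorm z (μ k - μ l) ≤ B :=
  let ⟨C, hC⟩ := hμ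
  ⟨C + C, fun k l => (freeNorm_sub_le z _ _).trans (add_le_add (hC k) (hC l))⟩

theorem seqCa_eq_limsup (hμ : ∃ C, ∀ n, freeNorm z (μ n) ≤ C) :
    seqCa z μ = limsup (fun p : ℕ × ℕ => freeNorm z (μ p.1 - μ p.2)) atTop :=
  let ⟨_, hB⟩ := exists_forall_freeNorm_sub_le hμ
  sInf_sSup_tails_eq_limsup (fun _ _ => freeNorm_nonneg z _) hB

theorem le_seqCa_of_frequently (hμ : ∃ C, ∀ n, freeNorm z (μ n) ≤ C)
    (h : ∃ᶠ p : ℕ × ℕ in atTop, a ≤ freeNorm z (μ p.1 - μ p.2)) : a ≤ seqCa z μ := by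
  obtain ⟨B, hB⟩ := exists_forall_freeNorm_sub_le hμ
  rw [seqCa_eq_limsup hμ]
  exact le_limsup_of_frequently_le h (isBoundedUnder_of ⟨B, fun p => hB p.1 p.2⟩)

theorem frequently_lt_of_lt_seqCa (hμ : ∃ C, ∀ n, freeNorm z (μ n) ≤ C) (h : a < seqCa z μ) :
    ∃ᶠ p : ℕ × ℕ in atTop, a < freeNorm z (μ p.1 - μ p.2) := by
  rw [seqCa_eq_limsup hμ] at h
  exact frequently_lt_of_lt_limsup
    (isBoundedUnder_of ⟨0, fun p => freeNorm_nonneg z _⟩).isCoboundedUnder_le h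

theorem isLUB_seqDe (hμ : ∃ C, ∀ n, freeNorm z (μ n) ≤ C) :
    IsLUB ((fun f => limsup (fun p : ℕ × ℕ => |pairing (μ p.1 - μ p.2) f|) atTop) '' lipBall z 1)
      (seqDe z μ) := by
  obtain ⟨B, hB⟩ := exists_forall_freeNorm_sub_le hμ
  have hfB (f : M → ℝ) (hf : f ∈ lipBall z 1) (k l : ℕ) : |pairing (μ k - μ l) f| ≤ B :=
    (abs_pairing_le_freeNorm _ hf).trans (hB k l)
  have hlim (f : M → ℝ) (hf : f ∈ lipBall z 1) :=
    sInf_sSup_tails_eq_limsup (fun k l => abs_nonneg (pairing (μ k - μ l) f)) (hfB f hf)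
  have hset : {t | ∃ f : M → ℝ, f z = 0 ∧ LipschitzWith 1 f ∧
      t = sInf {u | ∃ n : ℕ, u = sSup {s | ∃ k, n ≤ k ∧ ∃ l, n ≤ l ∧
        s = |∑ x ∈ (μ k - μ l).support, (μ k - μ l) x * f x|}}} =
      (fun f => limsup (fun p : ℕ × ℕ => |pairing (μ p.1 - μ p.2) f|) atTop) '' lipBall z 1 := by
    ext t
    exact ⟨fun ⟨f, hz, hf, ht⟩ => ⟨f, ⟨hz, hf⟩, (hlim f ⟨hz, hf⟩).symm.trans ht.symm⟩,
      fun ⟨f, hf, ht⟩ => ⟨f, hf.1, hf.2, ht.symm.trans (hlim f hf).symm⟩⟩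
  rw [seqDe, hset]
  refine isLUB_csSup ⟨_, mem_image_of_mem _ zero_mem_lipBall⟩
    ⟨B, forall_mem_image.2 fun f hf => ?_⟩
  exact limsup_le_of_le (isBoundedUnder_of ⟨0, fun _ => abs_nonneg _⟩).isCoboundedUnder_le
    (.of_forall fun p => hfB f hf p.1 p.2)

theorem le_seqDe_of_frequently (hμ : ∃ C, ∀ n, freeNorm z (μ n) ≤ C) (hf : f ∈ lipBall z 1)
    (h : ∃ᶠ p : ℕ × ℕ in atTop, a ≤ |pairing (μ p.1 - μ p.2) f|) : a ≤ seqDe z μ := by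
  obtain ⟨B, hB⟩ := exists_forall_freeNorm_sub_le hμ
  have hbdd : IsBoundedUnder (· ≤ ·) atTop fun p : ℕ × ℕ => |pairing (μ p.1 - μ p.2) f| :=
    isBoundedUnder_of ⟨B, fun p => (abs_pairing_le_freeNorm _ hf).trans (hB p.1 p.2)⟩
  exact (le_limsup_of_frequently_le h hbdd).trans
    ((isLUB_seqDe hμ).1 (mem_image_of_mem _ hf))

theorem exists_frequently_lt_of_lt_seqDe (hμ : ∃ C, ∀ n, freeNorm z (μ n) ≤ C)
    (h : a < seqDe z μ) :
    ∃ f ∈ lipBall z 1, ∃ᶠ p : ℕ × ℕ in atTop, a < |pairing (μ p.1 - μ p.2) f| := by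
  obtain ⟨f, hf, hlt⟩ := exists_mem_image.1 ((lt_isLUB_iff (isLUB_seqDe hμ)).1 h)
  exact ⟨f, hf, frequently_lt_of_lt_limsup
    (isBoundedUnder_of ⟨0, fun _ => abs_nonneg _⟩).isCoboundedUnder_le hlt⟩

end Sequences

section Alternating

variable {M : Type*}

/-- The sequence `w 0, -w 0, w 1, -w 1, …`, whose differences contain every `2 • w n`. -/
noncomputable def alternating (w : ℕ → M →₀ ℝ) (n : ℕ) : M →₀ ℝ :=
  (-1 : ℝ) ^ n • w (n / 2)

theorem abs_pairing_alternating (w : ℕ → M →₀ ℝ) (f : M → ℝ) (n : ℕ) :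
    |pairing (alternating w n) f| = |pairing (w (n / 2)) f| := by
  rw [alternating, map_smul, LinearMap.smul_apply, smul_eq_mul, abs_mul, abs_neg_one_pow, one_mul]

theorem alternating_even_sub_odd (w : ℕ → M →₀ ℝ) (n : ℕ) :
    alternating w (2 * n) - alternating w (2 * n + 1) = (2 : ℝ) • w n := by
  have hodd : (2 * n + 1) / 2 = n := by lia
  rw [alternating, alternating, pow_succ, pow_mul, neg_one_sq, one_pow, hodd,
    Nat.mul_div_cancel_left n two_pos]
  module

theorem frequently_lt_abs_pairing_of_alternating {w : ℕ → M →₀ ℝ} {f : M → ℝ} {b : ℝ}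
    (h : ∃ᶠ p : ℕ × ℕ in atTop, 2 * b < |pairing (alternating w p.1 - alternating w p.2) f|) :
    ∃ᶠ n in atTop, b < |pairing (w n) f| := by
  contrapose! h
  have halt : ∀ᶠ n in atTop, |pairing (alternating w n) f| ≤ b := by
    simp only [abs_pairing_alternating]
    exact (Nat.tendsto_div_const_atTop two_ne_zero).eventually h
  rw [← prod_atTop_atTop_eq]
  filter_upwards [halt.prod_mk halt] with p hp
  rw [map_sub, LinearMap.sub_apply]
  linarith [abs_sub (pairing (alternating w p.1) f) (pairing (alternating w p.2) f), hp.1, hp.2]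

end Alternating

section Schur

variable {M N : Type*} [MetricSpace M] [MetricSpace N] {z : M} {c : ℝ}

/-- The `c`-Schur property of `F(M)`, tested on sequences of finitely supported functions. -/
def IsCSchur (z : M) (c : ℝ) : Prop :=
  ∀ μ : ℕ → M →₀ ℝ, (∃ C, ∀ n, freeNorm z (μ n) ≤ C) → seqCa z μ ≤ c * seqDe z μ

/-- Every bounded sequence has infinitely many terms whose norm is attained, up to the factor `c`
and a given error, by one and the same functional. This reformulates the `c`-Schur property without
differences of terms. -/
def IsFrequentlyNormed (z : M) (c : ℝ) : Prop :=
  ∀ w : ℕ → M →₀ ℝ, (∃ C, ∀ n, freeNorm z (w n) ≤ C) → ∀ ε > 0,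
    ∃ f ∈ lipBall z 1, ∃ᶠ n in atTop, freeNorm z (w n) ≤ c * |pairing (w n) f| + ε

theorem freeNorm_alternating (w : ℕ → M →₀ ℝ) (n : ℕ) :
    freeNorm z (alternating w n) = freeNorm z (w (n / 2)) := by
  rw [alternating, freeNorm_smul, abs_neg_one_pow, one_mul]

theorem two_mul_limsup_freeNorm_le_seqCa_alternating {w : ℕ → M →₀ ℝ}
    (hw : ∃ C, ∀ n, freeNorm z (w n) ≤ C) :
    2 * limsup (fun n => freeNorm z (w n)) atTop ≤ seqCa z (alternating w) := by
  have halt : ∃ C, ∀ n, freeNorm z (alternating w n) ≤ C :=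
    hw.imp fun C hC n => (freeNorm_alternating w n).trans_le (hC _)
  rw [← le_div_iff₀' two_pos]
  refine le_of_forall_lt_imp_le_of_dense fun b hb => (le_div_iff₀' two_pos).2 ?_
  have hfreq : ∃ᶠ n in atTop, b < freeNorm z (w n) := frequently_lt_of_lt_limsup
    (isBoundedUnder_of ⟨0, fun n => freeNorm_nonneg z _⟩).isCoboundedUnder_le hb
  have hpair : Tendsto (fun n : ℕ => (2 * n, 2 * n + 1)) atTop atTop :=
    tendsto_atTop_mono (fun n => ⟨by lia, by lia⟩) tendsto_atTop_diagonal
  refine le_seqCa_of_frequently halt (hpair.frequently (hfreq.mono fun n hn => ?_))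
  rw [alternating_even_sub_odd, freeNorm_smul, abs_two]
  gcongr

theorem IsCSchur.isFrequentlyNormed (hc : 0 < c) (h : IsCSchur z c) : IsFrequentlyNormed z c := by
  intro w hw ε hε
  obtain ⟨C, hC⟩ := hw
  have halt : ∃ C, ∀ n, freeNorm z (alternating w n) ≤ C :=
    ⟨C, fun n => (freeNorm_alternating w n).trans_le (hC _)⟩
  set a := limsup (fun n => freeNorm z (w n)) atTop
  have hde : 2 * a ≤ c * seqDe z (alternating w) :=
    (two_mul_limsup_freeNorm_le_seqCa_alternating ⟨C, hC⟩).trans (h _ halt)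
  have hlt : 2 * ((a - ε / 2) / c) < seqDe z (alternating w) := by
    rw [← mul_div_assoc, div_lt_iff₀' hc]
    linarith
  obtain ⟨f, hf, hfreq⟩ := exists_frequently_lt_of_lt_seqDe halt hlt
  have hev : ∀ᶠ n in atTop, freeNorm z (w n) < a + ε / 2 :=
    eventually_lt_of_limsup_lt (lt_add_of_pos_right a (half_pos hε)) (isBoundedUnder_of ⟨C, hC⟩)
  refine ⟨f, hf, ((frequently_lt_abs_pairing_of_alternating hfreq).and_eventually hev).mono ?_⟩
  rintro n ⟨hpair, hnorm⟩
  rw [div_lt_iff₀' hc] at hpair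
  linarith

theorem IsFrequentlyNormed.isCSchur (hc : 0 < c) (h : IsFrequentlyNormed z c) : IsCSchur z c := by
  intro μ hμ
  refine le_of_forall_pos_le_add fun ε hε => ?_
  obtain ⟨B, hB⟩ := exists_forall_freeNorm_sub_le hμ
  choose p hp hlt using fun n : ℕ => frequently_atTop.1
    (frequently_lt_of_lt_seqCa hμ (sub_lt_self (seqCa z μ) (half_pos hε))) (n, n)
  obtain ⟨f, hf, hfreq⟩ :=
    h (fun n => μ (p n).1 - μ (p n).2) ⟨B, fun n => hB _ _⟩ (ε / 2) (half_pos hε)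
  have hp_tendsto : Tendsto p atTop atTop := tendsto_atTop_mono hp tendsto_atTop_diagonal
  have hde : (seqCa z μ - ε) / c ≤ seqDe z μ :=
    le_seqDe_of_frequently hμ hf <| hp_tendsto.frequently <| hfreq.mono fun n hn => by
      rw [div_le_iff₀' hc]
      linarith [hlt n]
  rw [div_le_iff₀' hc] at hde
  linarith

theorem isCSchur_iff_isFrequentlyNormed (hc : 0 < c) : IsCSchur z c ↔ IsFrequentlyNormed z c :=
  ⟨fun h => h.isFrequentlyNormed hc, fun h => h.isCSchur hc⟩

theorem IsFrequentlyNormed.of_isometry {ι : N → M} (hι : Isometry ι) {z : N}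
    (h : IsFrequentlyNormed (ι z) c) : IsFrequentlyNormed z c := by
  rintro w ⟨C, hC⟩ ε hε
  obtain ⟨f, hf, hfreq⟩ := h (fun n => (w n).mapDomain ι)
    ⟨C, fun n => (freeNorm_mapDomain hι z (w n)).trans_le (hC n)⟩ ε hε
  simp only [freeNorm_mapDomain hι, pairing_mapDomain] at hfreq
  exact ⟨f ∘ ι, comp_isometry_mem_lipBall hι hf, hfreq⟩

theorem IsFrequentlyNormed.exists_of_support_subset_range {ι : N → M} (hι : Isometry ι) {z : N}
    (h : IsFrequentlyNormed z c) {w : ℕ → M →₀ ℝ} (hw : ∃ C, ∀ n, freeNorm (ι z) (w n) ≤ C)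
    (hrange : ∀ n, ((w n).support : Set M) ⊆ range ι) {ε : ℝ} (hε : 0 < ε) :
    ∃ f ∈ lipBall (ι z) 1, ∃ᶠ n in atTop,
      freeNorm (ι z) (w n) ≤ c * |pairing (w n) f| + ε := by
  obtain ⟨C, hC⟩ := hw
  obtain ⟨u, hu⟩ : ∃ u : ℕ → N →₀ ℝ, ∀ n, (u n).mapDomain ι = w n :=
    ⟨_, fun n => Finsupp.mapDomain_comapDomain ι hι.injective (w n) (hrange n)⟩
  simp only [← hu, freeNorm_mapDomain hι, pairing_mapDomain] at hC ⊢
  obtain ⟨g, hg, hfreq⟩ := h u ⟨C, hC⟩ ε hε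
  obtain ⟨f, hf, rfl⟩ := exists_mem_lipBall_comp_isometry_eq hι hι.injective hg
  exact ⟨f, hf, hfreq⟩

end Schur

section Cutoff

variable {M : Type*} [PseudoMetricSpace M] {z : M} {R S : ℝ} {K : ℝ≥0} {f : M → ℝ}

/-- For `0 < R`, the radial cutoff around `z` that equals `1` up to distance `R` and `0` from
distance `2 * R` on. -/
noncomputable def cutoff (z : M) (R : ℝ) (x : M) : ℝ :=
  max (min (2 - dist x z / R) 1) 0

theorem cutoff_eq_one {x : M} (hR : 0 < R) (hx : dist x z ≤ R) : cutoff z R x = 1 := by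
  have h : dist x z / R ≤ 1 := (div_le_one hR).2 hx
  rw [cutoff, min_eq_right (by linarith), max_eq_left zero_le_one]

theorem cutoff_eq_zero {x : M} (hR : 0 < R) (hx : 2 * R ≤ dist x z) : cutoff z R x = 0 := by
  have h : 2 ≤ dist x z / R := (le_div_iff₀ hR).2 hx
  rw [cutoff, max_eq_right ((min_le_left _ _).trans (by linarith))]

theorem abs_cutoff_le_one (z : M) (R : ℝ) (x : M) : |cutoff z R x| ≤ 1 := by
  rw [cutoff, abs_of_nonneg (le_max_right _ _)]
  exact max_le (min_le_right _ _) zero_le_one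

theorem abs_cutoff_sub_cutoff_le (hR : 0 < R) (x y : M) :
    |cutoff z R x - cutoff z R y| ≤ dist x y / R :=
  calc |cutoff z R x - cutoff z R y|
      ≤ |min (2 - dist x z / R) 1 - min (2 - dist y z / R) 1| := abs_max_sub_max_le_abs _ _ _
    _ ≤ |(2 - dist x z / R) - (2 - dist y z / R)| := by
      refine (abs_min_sub_min_le_max _ _ _ _).trans_eq ?_
      rw [sub_self, abs_zero, max_eq_left (abs_nonneg _)]
    _ = |dist y z - dist x z| / R := by
      rw [sub_sub_sub_cancel_left, ← sub_div, abs_div, abs_of_pos hR]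
    _ ≤ dist x y / R := by
      gcongr
      rw [dist_comm x y]
      exact abs_dist_sub_le y x z

theorem cutoff_mul_mem_lipBall (hR : 0 < R) (hf : f ∈ lipBall z K) :
    cutoff z R * f ∈ lipBall z (3 * K) := by
  refine ⟨by rw [Pi.mul_apply, hf.1, mul_zero], LipschitzWith.of_dist_le_mul fun x y => ?_⟩
  wlog hxy : dist x z ≤ dist y z generalizing x y
  · rw [dist_comm, dist_comm x]
    exact this y x (le_of_not_ge hxy)
  simp only [Pi.mul_apply, Real.dist_eq]
  rcases le_total (2 * R) (dist x z) with hx | hx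
  · rw [cutoff_eq_zero hR hx, cutoff_eq_zero hR (hx.trans hxy), zero_mul, zero_mul, sub_zero,
      abs_zero]
    positivity
  · have hfx : |f x| ≤ K * (2 * R) := (abs_le_of_mem_lipBall hf x).trans (by gcongr)
    calc |cutoff z R x * f x - cutoff z R y * f y|
        = |cutoff z R y * (f x - f y) + (cutoff z R x - cutoff z R y) * f x| := by
          congr 1
          ring
      _ ≤ |cutoff z R y| * |f x - f y| + |cutoff z R x - cutoff z R y| * |f x| := by
          rw [← abs_mul, ← abs_mul]
          exact abs_add_le _ _
      _ ≤ 1 * (K * dist x y) + dist x y / R * (K * (2 * R)) := by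
          gcongr
          · exact abs_cutoff_le_one z R y
          · exact hf.2.dist_le_mul x y
          · exact abs_cutoff_sub_cutoff_le hR x y
      _ = (3 * K : ℝ≥0) * dist x y := by
          push_cast
          field_simp
          ring

/-- The cutoff to the annulus between the distances `R` and `2 * S` from `z`. -/
noncomputable def annulusCutoff (z : M) (R S : ℝ) : M → ℝ :=
  cutoff z S - cutoff z R

theorem annulusCutoff_mul_mem_lipBall (hR : 0 < R) (hS : 0 < S) (hf : f ∈ lipBall z K) :
    annulusCutoff z R S * f ∈ lipBall z (6 * K) := by
  have h := sub_mem_lipBall (cutoff_mul_mem_lipBall hS hf) (cutoff_mul_mem_lipBall hR hf)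
  rwa [← sub_mul, ← add_mul, show (3 + 3 : ℝ≥0) = 6 by norm_num] at h

theorem support_annulusCutoff_subset (hR : 0 < R) (hRS : R ≤ S) :
    support (annulusCutoff z R S) ⊆ {x | R < dist x z ∧ dist x z < 2 * S} := by
  intro x hx
  rw [mem_support, annulusCutoff, Pi.sub_apply] at hx
  have hS : 0 < S := hR.trans_le hRS
  refine ⟨lt_of_not_ge fun hle => hx ?_, lt_of_not_ge fun hle => hx ?_⟩
  · rw [cutoff_eq_one hR hle, cutoff_eq_one hS (hle.trans hRS), sub_self]
  · rw [cutoff_eq_zero hS hle, cutoff_eq_zero hR (by linarith), sub_self]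

end Cutoff

section SparsePieces

variable {M : Type*} [MetricSpace M] {z : M}

theorem exists_radius_frequently_freeNorm_annulusCutoff_smul_lt {w : ℕ → M →₀ ℝ}
    (hw : ∃ C, ∀ n, freeNorm z (w n) ≤ C) {ε : ℝ} (hε : 0 < ε) :
    ∃ R > 0, ∀ S ≥ R, ∃ᶠ n in atTop, freeNorm z (annulusCutoff z R S • w n) < ε := by
  obtain ⟨C, hC⟩ := hw
  by_contra! h
  choose! S hRS hS using h
  let ρ : ℕ → ℝ := fun k => (fun r => 2 * S r)^[k] 1
  have hρ_succ (k : ℕ) : ρ (k + 1) = 2 * S (ρ k) := iterate_succ_apply' _ _ _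
  have hρ_pos (k : ℕ) : 0 < ρ k := by
    induction k with
    | zero => exact one_pos
    | succ k ih =>
      rw [hρ_succ]
      linarith [hRS _ ih]
  have hρ_mono : Monotone ρ := monotone_nat_of_le_succ fun k => by
    rw [hρ_succ]
    linarith [hRS _ (hρ_pos k), hρ_pos k]
  have hdisj : Pairwise (Disjoint on fun k => support (annulusCutoff z (ρ k) (S (ρ k)))) := by
    refine (pairwise_disjoint_on _).2 fun k l hkl => disjoint_left.2 fun x hk hl => ?_
    have hxk := (support_annulusCutoff_subset (hρ_pos k) (hRS _ (hρ_pos k)) hk).2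
    have hxl := (support_annulusCutoff_subset (hρ_pos l) (hRS _ (hρ_pos l)) hl).1
    exact (hxl.trans hxk).not_ge ((hρ_succ k).symm.trans_le (hρ_mono hkl))
  obtain ⟨m, hm⟩ := exists_lt_nsmul hε (2 * (6 * 1 : ℝ≥0) * C)
  obtain ⟨n, hn⟩ := ((eventually_all_finset (Finset.range m)).2 fun k _ =>
    hS (ρ k) (hρ_pos k)).exists
  refine hm.not_ge ?_
  calc m • ε = ∑ _k ∈ Finset.range m, ε := by rw [Finset.sum_const, Finset.card_range]
    _ ≤ ∑ k ∈ Finset.range m, freeNorm z (annulusCutoff z (ρ k) (S (ρ k)) • w n) :=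
      Finset.sum_le_sum hn
    _ ≤ 2 * (6 * 1 : ℝ≥0) * freeNorm z (w n) :=
      sum_freeNorm_pointwise_smul_le (fun k _ f hf => annulusCutoff_mul_mem_lipBall (hρ_pos k)
        ((hρ_pos k).trans_le (hRS _ (hρ_pos k))) hf) (hdisj.set_pairwise _) (w n)
    _ ≤ 2 * (6 * 1 : ℝ≥0) * C := by
      gcongr
      exact hC n

theorem exists_sparse_subsequence {w : ℕ → M →₀ ℝ} (hw : ∃ C, ∀ n, freeNorm z (w n) ≤ C) {e : ℝ}
    (he : 0 < e) :
    ∃ R > 0, ∃ (φ : ℕ → ℕ) (S : ℕ → ℝ), StrictMono φ ∧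
      (∀ i, R ≤ S i ∧ (2 + e) * (2 * R) ≤ e * S i ∧
        freeNorm z (annulusCutoff z R (S i) • w (φ i)) < e) ∧
      ∀ i j, i < j → ∀ x ∈ (w (φ i)).support, (2 + e) * dist x z ≤ e * S j := by
  obtain ⟨R, hR, hfreq⟩ := exists_radius_frequently_freeNorm_annulusCutoff_smul_lt hw he
  have hlarge (a : ℝ) : ∀ᶠ S in atTop, a ≤ e * S :=
    (tendsto_id.const_mul_atTop he).eventually_ge_atTop a
  obtain ⟨p, hp, hsep⟩ := exists_seq_of_forall_finset_exists
    (fun p : ℕ × ℝ => R ≤ p.2 ∧ (2 + e) * (2 * R) ≤ e * p.2 ∧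
      freeNorm z (annulusCutoff z R p.2 • w p.1) < e)
    (fun p q => p.1 < q.1 ∧ ∀ x ∈ (w p.1).support, (2 + e) * dist x z ≤ e * q.2)
    fun s _ => by
      obtain ⟨S, hRS, hS, hsS⟩ := ((eventually_ge_atTop R).and ((hlarge _).and
        ((eventually_all_finset s).2 fun p _ =>
          (eventually_all_finset (w p.1).support).2 fun x _ => hlarge _))).exists
      obtain ⟨n, hn, hsn⟩ := ((hfreq S hRS).and_eventually
        ((eventually_all_finset s).2 fun p _ => eventually_gt_atTop p.1)).exists
      exact ⟨(n, S), ⟨hRS, hS, hn⟩, fun p hps => ⟨hsn p hps, hsS p hps⟩⟩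
  exact ⟨R, hR, fun i => (p i).1, fun i => (p i).2, fun i j hij => (hsep i j hij).1, hp,
    fun i j hij => (hsep i j hij).2⟩

theorem freeNorm_add_add_le_mul_abs_pairing_add {c : ℝ} (hc : 1 ≤ c) {e : ℝ≥0} {p q t : M →₀ ℝ}
    {F : M → ℝ} (hF : F ∈ lipBall z (1 + e)) (hp : freeNorm z p ≤ c * |pairing p F| + e)
    (hq : freeNorm z q ≤ e)
    (ht : |pairing p F| + freeNorm z t - e ≤ |pairing p F + pairing t F|) :
    freeNorm z (p + q + t) ≤ c * |pairing (p + q + t) F| + (c * (2 + e) + 2) * e := by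
  have hqF : |pairing q F| ≤ (1 + e) * e := calc
    |pairing q F| ≤ (1 + e : ℝ≥0) * freeNorm z q := abs_pairing_le q hF
    _ ≤ (1 + e) * e := by
      push_cast
      gcongr
  have hptF : |pairing p F + pairing t F| ≤ |pairing (p + q + t) F| + |pairing q F| := by
    have hsplit : pairing p F + pairing t F = pairing (p + q + t) F - pairing q F := by
      simp only [map_add, LinearMap.add_apply]
      ring
    rw [hsplit]
    exact abs_sub _ _
  calc freeNorm z (p + q + t) ≤ freeNorm z p + freeNorm z q + freeNorm z t := by
        linarith [freeNorm_add_le z (p + q) t, freeNorm_add_le z p q]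
    _ ≤ c * |pairing p F| + e + e + c * freeNorm z t := by
        linarith [le_mul_of_one_le_left (freeNorm_nonneg z t) hc]
    _ = c * (|pairing p F| + freeNorm z t) + e + e := by ring
    _ ≤ c * (|pairing (p + q + t) F| + (1 + e) * e + e) + e + e := by
        gcongr c * ?_ + e + e
        linarith
    _ = c * |pairing (p + q + t) F| + (c * (2 + e) + 2) * e := by ring

theorem exists_mem_lipBall_one_add_frequently_freeNorm_le {c : ℝ} (hc : 1 ≤ c)
    (h : ∀ A : Set M, ∀ hzA : z ∈ A, Bornology.IsBounded A → IsFrequentlyNormed (⟨z, hzA⟩ : A) c)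
    {w : ℕ → M →₀ ℝ} (hw : ∃ C, ∀ n, freeNorm z (w n) ≤ C) {e : ℝ≥0} (he : 0 < e) :
    ∃ F ∈ lipBall z (1 + e), ∃ᶠ n in atTop,
      freeNorm z (w n) ≤ c * |pairing (w n) F| + (c * (2 + e) + 2) * e := by
  obtain ⟨R, hR, φ, S, hφ, hS, hsep⟩ := exists_sparse_subsequence hw (NNReal.coe_pos.2 he)
  obtain ⟨C, hC⟩ := hw
  let p : ℕ → M →₀ ℝ := fun i => cutoff z R • w (φ i)
  let t : ℕ → M →₀ ℝ := fun i => (1 - cutoff z (S i)) • w (φ i)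
  have hsplit (i : ℕ) : w (φ i) = p i + annulusCutoff z R (S i) • w (φ i) + t i := by
    simp only [p, t, annulusCutoff]
    module
  have hp_bdd (i : ℕ) : freeNorm z (p i) ≤ (3 * 1 : ℝ≥0) * C :=
    (freeNorm_pointwise_smul_le (fun f hf => cutoff_mul_mem_lipBall hR hf) _).trans
      (mul_le_mul_of_nonneg_left (hC _) (NNReal.coe_nonneg _))
  have hp_supp (i : ℕ) : ((p i).support : Set M) ⊆ Metric.closedBall z (2 * R) :=
    fun x hx => le_of_not_gt fun hlt =>
      (mem_support_pointwise_smul.1 hx).1 (cutoff_eq_zero hR hlt.le)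
  have ht_supp (i : ℕ) : ∀ x ∈ (t i).support, x ∈ (w (φ i)).support ∧ S i ≤ dist x z := by
    refine fun x hx => ⟨(mem_support_pointwise_smul.1 hx).2, le_of_not_gt fun hlt =>
      (mem_support_pointwise_smul.1 hx).1 ?_⟩
    rw [Pi.sub_apply, Pi.one_apply, cutoff_eq_one (hR.trans_le (hS i).1) hlt.le, sub_self]
  have hz : z ∈ Metric.closedBall z (2 * R) := Metric.mem_closedBall_self (by positivity)
  obtain ⟨f, hf, hfreq⟩ := (h _ hz Metric.isBounded_closedBall).exists_of_support_subset_range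
    isometry_subtype_coe ⟨_, hp_bdd⟩ (fun i => (hp_supp i).trans_eq Subtype.range_coe.symm)
    (NNReal.coe_pos.2 he)
  choose g hg hgt using fun i =>
    exists_mem_lipBall_abs_add_freeNorm_lt (z := z) (t i) (pairing (p i) f) (NNReal.coe_pos.2 he)
  obtain ⟨F, hF, hFf, hFg⟩ := exists_mem_lipBall_eqOn_closedBall_and_far (by positivity) hf hg
    (E := fun i => (w (φ i)).support) (fun i => (hS i).2.1) hsep
  have hpF (i : ℕ) : pairing (p i) F = pairing (p i) f :=
    pairing_congr fun x hx => hFf (hp_supp i hx)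
  have htF (i : ℕ) : pairing (t i) F = pairing (t i) (g i) :=
    pairing_congr fun x hx => hFg i (ht_supp i x hx)
  refine ⟨F, hF, hφ.tendsto_atTop.frequently (hfreq.mono fun i hi => ?_)⟩
  rw [hsplit i]
  refine freeNorm_add_add_le_mul_abs_pairing_add hc hF ?_ (hS i).2.2.le ?_
  · rwa [hpF]
  · rw [hpF, htF]
    exact (hgt i).le

theorem IsFrequentlyNormed.of_bounded_subsets {c : ℝ} (hc : 1 ≤ c)
    (h : ∀ A : Set M, ∀ hzA : z ∈ A, Bornology.IsBounded A →
      IsFrequentlyNormed (⟨z, hzA⟩ : A) c) : IsFrequentlyNormed z c := by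
  rintro w ⟨C, hC⟩ ε hε
  obtain ⟨e, hlt, he⟩ : ∃ e : ℝ≥0, (c * (2 + e) + 2 + c * C) * e < ε ∧ 0 < e := by
    have hcont : Continuous fun e : ℝ≥0 => (c * (2 + e) + 2 + c * C) * (e : ℝ) := by fun_prop
    have hlim := hcont.tendsto' 0 0 (by rw [NNReal.coe_zero, mul_zero])
    exact (((hlim.eventually_lt_const hε).filter_mono nhdsWithin_le_nhds).and
      (self_mem_nhdsWithin (s := Ioi 0))).exists
  obtain ⟨F, hF, hfreq⟩ := exists_mem_lipBall_one_add_frequently_freeNorm_le hc h ⟨C, hC⟩ he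
  let f : M → ℝ := ((1 + e : ℝ≥0) : ℝ)⁻¹ • F
  have hf : f ∈ lipBall z 1 := inv_smul_mem_lipBall_one hF
  have hFf : F = ((1 + e : ℝ≥0) : ℝ) • f := (smul_inv_smul₀ (by positivity) F).symm
  have hpair (n : ℕ) : |pairing (w n) F| ≤ |pairing (w n) f| + e * C := calc
    |pairing (w n) F| = |pairing (w n) f| + e * |pairing (w n) f| := by
      rw [hFf, map_smul, smul_eq_mul, abs_mul, abs_of_nonneg (NNReal.coe_nonneg _)]
      push_cast
      ring
    _ ≤ |pairing (w n) f| + e * C := by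
      gcongr
      exact (abs_pairing_le_freeNorm _ hf).trans (hC n)
  refine ⟨f, hf, hfreq.mono fun n hn => ?_⟩
  calc freeNorm z (w n) ≤ c * |pairing (w n) F| + (c * (2 + e) + 2) * e := hn
    _ ≤ c * (|pairing (w n) f| + e * C) + (c * (2 + e) + 2) * e := by
      gcongr
      exact hpair n
    _ ≤ c * |pairing (w n) f| + ε := by linarith

end SparsePieces

/-- `F(M)` is `c`-Schur iff `F(A)` is `c`-Schur for every bounded subset `A ⊆ M`
containing the base point (here `A` carries the induced metric). -/
theorem cSchur_iff_cSchur_bounded_subsets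
    {M : Type*} [MetricSpace M] (z : M) (c : ℝ) (hc : 1 ≤ c) :
    (∀ A : Set M, ∀ hzA : z ∈ A, Bornology.IsBounded A →
      ∀ μ : ℕ → (A →₀ ℝ), (∃ C : ℝ, ∀ n, freeNorm (⟨z, hzA⟩ : A) (μ n) ≤ C) →
        seqCa (⟨z, hzA⟩ : A) μ ≤ c * seqDe (⟨z, hzA⟩ : A) μ) ↔
    (∀ μ : ℕ → M →₀ ℝ, (∃ C : ℝ, ∀ n, freeNorm z (μ n) ≤ C) →
      seqCa z μ ≤ c * seqDe z μ) := by
  change (∀ A : Set M, ∀ hzA : z ∈ A, Bornology.IsBounded A → IsCSchur (⟨z, hzA⟩ : A) c) ↔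
    IsCSchur z c
  simp only [isCSchur_iff_isFrequentlyNormed (zero_lt_one.trans_le hc)]
  exact ⟨fun h => .of_bounded_subsets hc h, fun h A hzA _ =>
    IsFrequentlyNormed.of_isometry (z := (⟨z, hzA⟩ : A)) isometry_subtype_coe h⟩
end

section
/- Let N ∈ ℕ and let (M,d) be a pointed metric space with base point 0 such that d takes only the values 0,1,…,N. Let (μ_n) be a sequence of summable functions μ_n : M → ℝ (i.e., Σ_{x∈M} |μ_n(x)| < ∞) with sup_n ‖μ_n‖ < ∞ (free norm), and assume limsup_n ‖μ_n‖ > c for some c > 0. Then there exists a 3-Lipschitz function g : M → ℝ with g(0) = 0 such that limsup_n Σ_{x∈M} μ_n(x)·g(x) > c. (Here the pairing sum converges absolutely since every Lipschitz function vanishing at 0 is bounded on M, and summable functions with the free norm represent exactly the elements of the Lipschitz-free space F(M) for such M.) -/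
open Filter

/-- The free norm of a summable function `μ : M → ℝ` over a pointed metric space
`(M, z)`: the supremum of `∑' x, μ x * f x` over all `1`-Lipschitz `f` vanishing at
the base point. -/
noncomputable def freeNormSummable {M : Type*} [MetricSpace M] (z : M) (μ : M → ℝ) : ℝ :=
  sSup {s | ∃ f : M → ℝ, f z = 0 ∧ LipschitzWith 1 f ∧ s = ∑' x : M, μ x * f x}

/-!
Off the base point, the total mass of the `μ n` is bounded, because separation makes every small
bounded function Lipschitz. Take almost norming `f n` for `μ n`, rescaled to be `K`-Lipschitz with
`K < 1`. A gliding hump along an ultrafilter concentrates the `μ n`, after passing to a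
subsequence, on a fixed finite core and pairwise disjoint finite blocks, such that the `f n` nearly
agree on the core and on all earlier blocks. Gluing the `f n` along these sets gives a
`3`-Lipschitz function unless a point of one block conflicts with a point of an earlier one. As
`K < 1`, the conflicting points in successive blocks get closer to the given one by a definite
amount, so in a bounded space a point conflicts with boundedly many blocks. The mass in conflict is
therefore small along a further subsequence; discard it, glue, and extend by McShane.
-/

open Topology NNReal

section Limits

variable {ι α : Type*}

lemma exists_tendsto_of_eventually_mem_Icc (𝒰 : Ultrafilter ι) {b : ι → ℝ} {s t : ℝ}
    (hb : ∀ᶠ n in 𝒰, b n ∈ Set.Icc s t) : ∃ L, Tendsto b 𝒰 (𝓝 L) := by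
  obtain ⟨L, -, hL⟩ := isCompact_Icc.ultrafilter_le_nhds' (𝒰.map b) hb
  exact ⟨L, hL⟩

lemma exists_summable_tendsto_of_sum_le (𝒰 : Ultrafilter ι) {u : ι → α → ℝ} {C : ℝ}
    (hu : ∀ n x, 0 ≤ u n x) (hC : ∀ T : Finset α, ∀ᶠ n in 𝒰, ∑ x ∈ T, u n x ≤ C) :
    ∃ v : α → ℝ, Summable v ∧ ∀ x, Tendsto (fun n => u n x) 𝒰 (𝓝 (v x)) := by
  have hlim : ∀ x, ∃ L, Tendsto (fun n => u n x) 𝒰 (𝓝 L) := fun x =>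
    exists_tendsto_of_eventually_mem_Icc 𝒰 <| (hC {x}).mono fun n hn =>
      ⟨hu n x, by simpa only [Finset.sum_singleton] using hn⟩
  choose v hv using hlim
  exact ⟨v, summable_of_sum_le (fun x => ge_of_tendsto' (hv x) fun n => hu n x)
    fun T => le_of_tendsto (tendsto_finsetSum T fun x _ => hv x) (hC T), hv⟩

/- Along an ultrafilter the rows of `a` converge to a summable sequence `v`, so it suffices to keep
`a (s i) (s l)` below `v (s i) + 2⁻ˢ⁽ⁱ⁾` and to start far out in the sum of these bounds. -/
lemma exists_strictMono_sum_range_le {a : ℕ → ℕ → ℝ} {C ε : ℝ} (ha : ∀ j l, 0 ≤ a j l)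
    (hC : ∀ l, ∑ j ∈ Finset.range l, a j l ≤ C) (hε : 0 < ε) :
    ∃ s : ℕ → ℕ, StrictMono s ∧ ∀ l, ∑ i ∈ Finset.range l, a (s i) (s l) ≤ ε := by
  have hgt (m : ℕ) : ∀ᶠ l in (hyperfilter ℕ : Filter ℕ), m < l :=
    Nat.hyperfilter_le_atTop (eventually_gt_atTop m)
  have hsum (T : Finset ℕ) : ∀ᶠ l in (hyperfilter ℕ : Filter ℕ), ∑ j ∈ T, a j l ≤ C := by
    obtain ⟨m, hm⟩ := T.exists_nat_subset_range
    filter_upwards [hgt m] with l hl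
    exact (Finset.sum_le_sum_of_subset_of_nonneg
      (hm.trans (Finset.range_subset_range.mpr hl.le)) fun j _ _ => ha j l).trans (hC l)
  obtain ⟨v, hv, hav⟩ := exists_summable_tendsto_of_sum_le _ (fun l j => ha j l) hsum
  obtain ⟨F, hF⟩ := summable_iff_vanishing_norm.mp (hv.add summable_geometric_two) ε hε
  obtain ⟨s, hsF, hs⟩ := exists_seq_of_forall_finset_exists (· ∉ F)
    (fun j l => j < l ∧ a j l ≤ v j + (1 / 2) ^ j) fun T _ => by
      have hT : ∀ᶠ l in (hyperfilter ℕ : Filter ℕ), ∀ j ∈ T, j < l ∧ a j l ≤ v j + (1 / 2) ^ j :=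
        (Finset.eventually_all T).mpr fun j _ => (hgt j).and <|
          (hav j).eventually (eventually_le_nhds (lt_add_of_pos_right _ (by positivity)))
      exact (Filter.Eventually.and F.finite_toSet.compl_mem_hyperfilter hT).exists
  have hmono : StrictMono s := fun i l hil => (hs i l hil).1
  refine ⟨s, hmono, fun l => ?_⟩
  calc ∑ i ∈ Finset.range l, a (s i) (s l)
      ≤ ∑ i ∈ Finset.range l, (v (s i) + (1 / 2) ^ s i) :=
        Finset.sum_le_sum fun i hi => (hs i l (Finset.mem_range.mp hi)).2
    _ = ∑ j ∈ (Finset.range l).image s, (v j + (1 / 2) ^ j) :=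
        (Finset.sum_image (f := fun j => v j + (1 / 2) ^ j) hmono.injective.injOn).symm
    _ ≤ ε := by
        refine (le_abs_self _).trans (hF _ (Finset.disjoint_left.mpr fun j hj => ?_)).le
        obtain ⟨i, -, rfl⟩ := Finset.mem_image.mp hj
        exact hsF i

end Limits

section FinsetSums

variable {ι α : Type*}

lemma sum_sum_eq_sum_biUnion_card_mul [DecidableEq α] (s : Finset ι) (S : ι → Finset α)
    (w : α → ℝ) :
    ∑ j ∈ s, ∑ x ∈ S j, w x = ∑ x ∈ s.biUnion S, (Finset.card {j ∈ s | x ∈ S j} : ℝ) * w x := by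
  simp_rw [← nsmul_eq_mul, ← Finset.sum_const]
  exact Finset.sum_comm' fun j x => by simp only [Finset.mem_filter, Finset.mem_biUnion]; tauto

lemma sum_biUnion_le_sum_sum [DecidableEq α] {s : Finset ι} {S : ι → Finset α} {w : α → ℝ}
    (hw : ∀ x, 0 ≤ w x) : ∑ x ∈ s.biUnion S, w x ≤ ∑ j ∈ s, ∑ x ∈ S j, w x := by
  rw [sum_sum_eq_sum_biUnion_card_mul]
  refine Finset.sum_le_sum fun x hx => le_mul_of_one_le_left (hw x) ?_
  obtain ⟨j, hj, hxj⟩ := Finset.mem_biUnion.mp hx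
  exact_mod_cast Finset.card_pos.mpr ⟨j, Finset.mem_filter.mpr ⟨hj, hxj⟩⟩

lemma sum_sum_le_mul_sum {s : Finset ι} {S : ι → Finset α} {A : Finset α} {w : α → ℝ} {k : ℕ}
    (hw : ∀ x, 0 ≤ w x) (hSA : ∀ j ∈ s, S j ⊆ A)
    (hk : ∀ x, ∀ J ⊆ s, (∀ j ∈ J, x ∈ S j) → J.card ≤ k) :
    ∑ j ∈ s, ∑ x ∈ S j, w x ≤ k * ∑ x ∈ A, w x := by
  classical
  calc ∑ j ∈ s, ∑ x ∈ S j, w x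
      = ∑ x ∈ s.biUnion S, (Finset.card {j ∈ s | x ∈ S j} : ℝ) * w x :=
        sum_sum_eq_sum_biUnion_card_mul s S w
    _ ≤ ∑ x ∈ s.biUnion S, k * w x := by
        refine Finset.sum_le_sum fun x _ => mul_le_mul_of_nonneg_right ?_ (hw x)
        exact_mod_cast hk x _ (Finset.filter_subset _ _) fun j hj => (Finset.mem_filter.mp hj).2
    _ ≤ ∑ x ∈ A, k * w x :=
        Finset.sum_le_sum_of_subset_of_nonneg (Finset.biUnion_subset.mpr hSA)
          fun x _ _ => mul_nonneg k.cast_nonneg (hw x)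
    _ = k * ∑ x ∈ A, w x := (Finset.mul_sum ..).symm

lemma card_le_floor_add_one_of_add_lt [LinearOrder ι] {J : Finset ι} {a : ι → ℝ} {η A : ℝ}
    (hη : 0 < η) (ha : ∀ i ∈ J, 0 ≤ a i) (haA : ∀ i ∈ J, a i ≤ A)
    (hgap : ∀ i ∈ J, ∀ j ∈ J, i < j → a j + η < a i) : J.card ≤ ⌊A / η⌋₊ + 1 := by
  have hanti : StrictAntiOn (fun i => ⌊a i / η⌋₊) (J : Set ι) := fun i hi j hj hij => by
    rw [← Nat.add_one_le_iff, ← Nat.floor_add_one (div_nonneg (ha j hj) hη.le),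
      div_add_one hη.ne']
    exact Nat.floor_mono (div_le_div_of_nonneg_right (hgap i hi j hj hij).le hη.le)
  rw [← Finset.card_range (⌊A / η⌋₊ + 1)]
  refine Finset.card_le_card_of_injOn _ (fun i hi => ?_) hanti.injOn
  rw [Finset.coe_range, Set.mem_Iio, Nat.lt_add_one_iff]
  exact Nat.floor_mono (div_le_div_of_nonneg_right (haA i hi) hη.le)

lemma sum_mul_le_add_mul_sum_sdiff [DecidableEq α] {w h : α → ℝ} {η B : ℝ} {S : Finset α}
    (T : Finset α) (hw : ∀ x, 0 ≤ w x) (hη : 0 ≤ η) (hS : ∀ x ∈ S, h x ≤ η) (hB : ∀ x, h x ≤ B) :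
    ∑ x ∈ T, w x * h x ≤ η * ∑ x ∈ T, w x + B * ∑ x ∈ T \ S, w x := by
  rw [← Finset.sum_inter_add_sum_sdiff T S, Finset.mul_sum, Finset.mul_sum]
  refine add_le_add (le_trans (Finset.sum_le_sum fun x hx => ?_) <|
    Finset.sum_le_sum_of_subset_of_nonneg Finset.inter_subset_left
      fun x _ _ => mul_nonneg hη (hw x)) (Finset.sum_le_sum fun x _ => ?_)
  · rw [mul_comm η]
    exact mul_le_mul_of_nonneg_left (hS x (Finset.mem_inter.mp hx).2) (hw x)
  · rw [mul_comm B]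
    exact mul_le_mul_of_nonneg_left (hB x) (hw x)

lemma exists_disjoint_finset_sum_le {w : α → ℝ} {η : ℝ} {A E : Finset α} [DecidableEq α]
    (hw : ∀ x, 0 ≤ w x) (hws : Summable w) (hη : 0 < η) (hE : ∑ x ∈ E \ A, w x ≤ η) :
    ∃ G : Finset α, Disjoint E G ∧
      ∀ T : Finset α, Disjoint T A → Disjoint T G → ∑ x ∈ T, w x ≤ 2 * η := by
  obtain ⟨G, hG⟩ := summable_iff_vanishing_norm.mp hws η hη
  refine ⟨G \ E, Finset.disjoint_sdiff, fun T hTA hTG => ?_⟩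
  rw [← Finset.sum_inter_add_sum_sdiff T E, two_mul]
  have hTE : T ∩ E ⊆ E \ A := fun x hx => Finset.mem_sdiff.mpr
    ⟨(Finset.mem_inter.mp hx).2, Finset.disjoint_left.mp hTA (Finset.mem_inter.mp hx).1⟩
  exact add_le_add
    ((Finset.sum_le_sum_of_subset_of_nonneg hTE fun x _ _ => hw x).trans hE)
    ((le_abs_self _).trans (hG _ (disjoint_sdiff_comm.mpr hTG)).le)

end FinsetSums

lemma exists_lipschitzWith_eqOn {ι M : Type*} [LinearOrder ι] [PseudoMetricSpace M] {K : ℝ≥0}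
    {B : ι → Set M} {f : ι → M → ℝ} (hself : ∀ i, LipschitzOnWith K (f i) (B i))
    (hcross : ∀ i j, i < j → ∀ x ∈ B i, ∀ y ∈ B j, dist (f i x) (f j y) ≤ K * dist x y) :
    ∃ g : M → ℝ, LipschitzWith K g ∧ ∀ i, Set.EqOn g (f i) (B i) := by
  have hall (p q : Σ i, B i) : dist (f p.1 p.2) (f q.1 q.2) ≤ K * dist (p.2 : M) q.2 := by
    obtain ⟨⟨i, x, hx⟩, j, y, hy⟩ := p, q
    obtain hij | rfl | hij := lt_trichotomy i j
    · exact hcross i j hij x hx y hy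
    · exact (hself i).dist_le_mul x hx y hy
    · simpa only [dist_comm] using hcross j i hij y hy x hx
  let pt : (Σ i, B i) → M := fun p => p.2
  let val : (Σ i, B i) → ℝ := fun p => f p.1 p.2
  have hfac : val.FactorsThrough pt := fun p q hpq => by
    refine dist_le_zero.mp ((hall p q).trans_eq ?_)
    rw [show (p.2 : M) = q.2 from hpq, dist_self, mul_zero]
  have hext (p) : Function.extend pt val 0 (pt p) = val p := hfac.extend_apply 0 p
  have hlip : LipschitzOnWith K (Function.extend pt val 0) (Set.range pt) := by
    refine LipschitzOnWith.of_dist_le_mul ?_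
    rintro _ ⟨p, rfl⟩ _ ⟨q, rfl⟩
    rw [hext, hext]
    exact hall p q
  obtain ⟨g, hg, hgeq⟩ := hlip.extend_real
  exact ⟨g, hg, fun i x hx => (hgeq ⟨⟨i, x, hx⟩, rfl⟩).symm.trans (hext ⟨i, x, hx⟩)⟩

/-- The weights `w n` split into a finite `core`, fixed once and for all, and pairwise disjoint
finite blocks gliding off to infinity, with at most `δ` of `w n` lying elsewhere. On the core
the functions `f n` nearly agree, and so do, on each block, all `f n` with a later index. -/
structure IsGlidingHump {α : Type*} (f w : ℕ → α → ℝ) (δ : ℝ) (core : Finset α)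
    (block : ℕ → Finset α) : Prop where
  disjoint_core : ∀ i, Disjoint core (block i)
  disjoint_block : ∀ i j, i < j → Disjoint (block i) (block j)
  dist_core_le : ∀ i j, ∀ x ∈ core, dist (f i x) (f j x) ≤ δ
  dist_block_le : ∀ i j k, i < j → i < k → ∀ x ∈ block i, dist (f j x) (f k x) ≤ δ
  sum_outside_le : ∀ i, ∀ T : Finset α, Disjoint T core → Disjoint T (block i) →
    ∑ x ∈ T, w i x ≤ δ

lemma IsGlidingHump.comp_strictMono {α : Type*} {f w : ℕ → α → ℝ} {δ : ℝ} {core : Finset α}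
    {block : ℕ → Finset α} (h : IsGlidingHump f w δ core block) {s : ℕ → ℕ} (hs : StrictMono s) :
    IsGlidingHump (f ∘ s) (w ∘ s) δ core (block ∘ s) where
  disjoint_core i := h.disjoint_core (s i)
  disjoint_block _ _ hij := h.disjoint_block _ _ (hs hij)
  dist_core_le i j := h.dist_core_le (s i) (s j)
  dist_block_le _ _ _ hij hik := h.dist_block_le _ _ _ (hs hij) (hs hik)
  sum_outside_le i := h.sum_outside_le (s i)

lemma exists_finset_frequently_dist_le_and_sum_sdiff_le {α : Type*} [DecidableEq α]
    {f w : ℕ → α → ℝ} {B C η : ℝ} (z : α) (hf : ∀ n x, |f n x| ≤ B) (hw : ∀ n x, 0 ≤ w n x)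
    (hC : ∀ n, ∀ T : Finset α, ∑ x ∈ T, w n x ≤ C) (hη : 0 < η) :
    ∃ (core : Finset α) (F : α → ℝ), z ∈ core ∧ ∀ E : Finset α, ∃ᶠ n in atTop,
      (∀ x ∈ E, dist (f n x) (F x) ≤ η) ∧ ∑ x ∈ E \ core, w n x ≤ η := by
  have hlim : ∀ x, ∃ L, Tendsto (fun n => f n x) (hyperfilter ℕ) (𝓝 L) := fun x =>
    exists_tendsto_of_eventually_mem_Icc _ (.of_forall fun n => abs_le.mp (hf n x))
  choose F hF using hlim
  obtain ⟨u, hu, hwu⟩ :=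
    exists_summable_tendsto_of_sum_le (hyperfilter ℕ) hw fun T => .of_forall fun n => hC n T
  obtain ⟨A, hA⟩ := summable_iff_vanishing_norm.mp hu η hη
  refine ⟨insert z A, F, Finset.mem_insert_self z A, fun E => ?_⟩
  have hnear : ∀ᶠ n in hyperfilter ℕ, ∀ x ∈ E, dist (f n x) (F x) ≤ η :=
    (Finset.eventually_all E).mpr fun x _ =>
      (hF x).eventually (Metric.closedBall_mem_nhds _ hη)
  have hlight : ∀ᶠ n in hyperfilter ℕ, ∑ x ∈ E \ insert z A, w n x ≤ η := by
    refine (tendsto_finsetSum _ fun x _ => hwu x).eventually (eventually_le_nhds ?_)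
    exact (le_abs_self _).trans_lt
      (hA _ (Finset.sdiff_disjoint.mono_right (Finset.subset_insert z A)))
  exact (hnear.and hlight).frequently.filter_mono Nat.hyperfilter_le_atTop

theorem exists_isGlidingHump {α : Type*} {f w : ℕ → α → ℝ} {B C δ : ℝ} (z : α)
    (hf : ∀ n x, |f n x| ≤ B) (hw : ∀ n x, 0 ≤ w n x)
    (hC : ∀ n, ∀ T : Finset α, ∑ x ∈ T, w n x ≤ C) (hδ : 0 < δ) :
    ∃ (φ : ℕ → ℕ) (core : Finset α) (block : ℕ → Finset α),
      StrictMono φ ∧ z ∈ core ∧ IsGlidingHump (f ∘ φ) (w ∘ φ) δ core block := by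
  classical
  obtain ⟨core, F, hz, hcore⟩ :=
    exists_finset_frequently_dist_le_and_sum_sdiff_le z hf hw hC (half_pos hδ)
  obtain ⟨p, hp, hpp⟩ := exists_seq_of_forall_finset_exists
    (fun q : ℕ × Finset α => (∀ x ∈ core, dist (f q.1 x) (F x) ≤ δ / 2) ∧ Disjoint core q.2 ∧
      ∀ T : Finset α, Disjoint T core → Disjoint T q.2 → ∑ x ∈ T, w q.1 x ≤ δ)
    (fun q r => q.1 < r.1 ∧ Disjoint q.2 r.2 ∧ ∀ x ∈ q.2, dist (f r.1 x) (F x) ≤ δ / 2)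
    fun s _ => by
      let E := core ∪ s.biUnion Prod.snd
      have hcoreE : core ⊆ E := Finset.subset_union_left
      have hsE (q) (hq : q ∈ s) : q.2 ⊆ E :=
        (Finset.subset_biUnion_of_mem Prod.snd hq).trans Finset.subset_union_right
      have hlater : ∀ᶠ n in atTop, ∀ q ∈ s, q.1 < n :=
        (Finset.eventually_all s).mpr fun q _ => eventually_gt_atTop q.1
      obtain ⟨n, ⟨hn, hnE⟩, hns⟩ := ((hcore E).and_eventually hlater).exists
      obtain ⟨G, hEG, hG⟩ := exists_disjoint_finset_sum_le (hw n)
        (summable_of_sum_le (hw n) (hC n)) (half_pos hδ) hnE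
      rw [mul_div_cancel₀ δ two_ne_zero] at hG
      exact ⟨(n, G), ⟨fun x hx => hn x (hcoreE hx), hEG.mono_left hcoreE, hG⟩, fun q hq =>
        ⟨hns q hq, hEG.mono_left (hsE q hq), fun x hx => hn x (hsE q hq hx)⟩⟩
  have hclose {i j : ℕ} {x : α} (hi : dist (f i x) (F x) ≤ δ / 2)
      (hj : dist (f j x) (F x) ≤ δ / 2) : dist (f i x) (f j x) ≤ δ :=
    (dist_triangle_right _ _ _).trans ((add_le_add hi hj).trans_eq (add_halves δ))
  exact ⟨fun i => (p i).1, core, fun i => (p i).2, fun i j hij => (hpp i j hij).1,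
    hz,
    { disjoint_core := fun i => (hp i).2.1
      disjoint_block := fun i j hij => (hpp i j hij).2.1
      dist_core_le := fun i j x hx => hclose ((hp i).1 x hx) ((hp j).1 x hx)
      dist_block_le := fun i j k hij hik x hx =>
        hclose ((hpp i j hij).2.2 x hx) ((hpp i k hik).2.2 x hx)
      sum_outside_le := fun i => (hp i).2.2 }⟩

section Conflicts

variable {M : Type*} [PseudoMetricSpace M]

open scoped Classical in
/-- The points of block `l` at which `f l` cannot be glued to `f j` on block `j` without the
Lipschitz constant exceeding `3`. -/
noncomputable def conflictSet (f : ℕ → M → ℝ) (block : ℕ → Finset M) (j l : ℕ) : Finset M :=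
  {x ∈ block l | ∃ y ∈ block j, 3 * dist x y < dist (f l x) (f j y)}

lemma conflictSet_subset (f : ℕ → M → ℝ) (block : ℕ → Finset M) (j l : ℕ) :
    conflictSet f block j l ⊆ block l :=
  Finset.filter_subset _ _

lemma mem_conflictSet {f : ℕ → M → ℝ} {block : ℕ → Finset M} {j l : ℕ} {x : M} :
    x ∈ conflictSet f block j l ↔
      x ∈ block l ∧ ∃ y ∈ block j, 3 * dist x y < dist (f l x) (f j y) :=
  Finset.mem_filter

namespace IsGlidingHump

variable {f w : ℕ → M → ℝ} {δ r D : ℝ} {core : Finset M} {block : ℕ → Finset M}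

/- Going from `f l x` to `f j y` through `y'` costs `K * dist x y'`, then `δ`, then
`K * dist y' y ≤ K * (dist x y' + dist x y)`; this beats `3 * dist x y` only if `y'` is markedly
further from `x` than `y`. -/
lemma dist_add_lt_dist (h : IsGlidingHump f w δ core block) {K : ℝ≥0} (hK : K ≤ 1)
    (hf : ∀ n, LipschitzWith K (f n)) (hsep : Pairwise fun x y : M => r ≤ dist x y)
    (hδ : 2 * δ ≤ (1 - K) * r) {i j l : ℕ} (hij : i < j) (hjl : j < l) {x y y' : M}
    (hx : x ∈ block l) (hy' : y' ∈ block i) (hy : y ∈ block j)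
    (hxy : 3 * dist x y < dist (f l x) (f j y)) : dist x y + δ / 2 < dist x y' := by
  have hK' : (K : ℝ) ≤ 1 := hK
  have hpath : dist (f l x) (f j y) ≤ K * dist x y' + δ + K * (dist x y' + dist x y) :=
    calc dist (f l x) (f j y)
        ≤ dist (f l x) (f l y') + dist (f l y') (f j y') + dist (f j y') (f j y) :=
          dist_triangle4 _ _ _ _
      _ ≤ K * dist x y' + δ + K * dist y' y := by
          gcongr
          exacts [(hf l).dist_le_mul x y', h.dist_block_le i l j (hij.trans hjl) hij y' hy',
            (hf j).dist_le_mul y' y]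
      _ ≤ K * dist x y' + δ + K * (dist x y' + dist x y) := by
          gcongr
          exact dist_triangle_left y' y x
  have hne : x ≠ y := (Finset.disjoint_iff_ne.mp (h.disjoint_block j l hjl) y hy x hx).symm
  have hgap : (1 - K) * r ≤ (1 - K) * dist x y :=
    mul_le_mul_of_nonneg_left (hsep hne) (sub_nonneg.mpr hK')
  have hKd : K * dist x y' ≤ dist x y' := mul_le_of_le_one_left dist_nonneg hK'
  linarith

/- The conflicting points in the successive blocks move closer and closer to `x`. -/
lemma card_le_of_mem_conflictSet (h : IsGlidingHump f w δ core block) {K : ℝ≥0} (hK : K ≤ 1)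
    (hf : ∀ n, LipschitzWith K (f n)) (hsep : Pairwise fun x y : M => r ≤ dist x y)
    (hD : ∀ x y : M, dist x y ≤ D) (hδ₀ : 0 < δ) (hδ : 2 * δ ≤ (1 - K) * r) {l : ℕ} {x : M}
    {J : Finset ℕ} (hJl : ∀ j ∈ J, j < l) (hJ : ∀ j ∈ J, x ∈ conflictSet f block j l) :
    J.card ≤ ⌊D / (δ / 2)⌋₊ + 1 := by
  have hy : ∀ j, ∃ y, j ∈ J → y ∈ block j ∧ 3 * dist x y < dist (f l x) (f j y) := fun j => by
    by_cases hj : j ∈ J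
    · exact (mem_conflictSet.mp (hJ j hj)).2.imp fun _ hy _ => hy
    · exact ⟨x, fun hj' => absurd hj' hj⟩
  choose y hy using hy
  exact card_le_floor_add_one_of_add_lt (half_pos hδ₀) (fun j _ => dist_nonneg)
    (fun j _ => hD x (y j)) fun i hi j hj hij =>
      h.dist_add_lt_dist hK hf hsep hδ hij (hJl j hj) (mem_conflictSet.mp (hJ j hj)).1
        (hy i hi).1 (hy j hj).1 (hy j hj).2

lemma exists_strictMono_sum_conflictSet_le (h : IsGlidingHump f w δ core block) {K : ℝ≥0}
    {C ε : ℝ} (hK : K ≤ 1) (hf : ∀ n, LipschitzWith K (f n))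
    (hsep : Pairwise fun x y : M => r ≤ dist x y) (hD : ∀ x y : M, dist x y ≤ D) (hδ₀ : 0 < δ)
    (hδ : 2 * δ ≤ (1 - K) * r) (hw : ∀ n x, 0 ≤ w n x)
    (hC : ∀ n, ∀ T : Finset M, ∑ x ∈ T, w n x ≤ C) (hε : 0 < ε) :
    ∃ s : ℕ → ℕ, StrictMono s ∧ ∀ l, ∑ i ∈ Finset.range l,
      ∑ x ∈ conflictSet (f ∘ s) (block ∘ s) i l, w (s l) x ≤ ε := by
  refine exists_strictMono_sum_range_le
    (a := fun j l => ∑ x ∈ conflictSet f block j l, w l x) (C := (⌊D / (δ / 2)⌋₊ + 1 : ℕ) * C)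
    (fun j l => Finset.sum_nonneg fun x _ => hw l x) (fun l => ?_) hε
  calc ∑ j ∈ Finset.range l, ∑ x ∈ conflictSet f block j l, w l x
      ≤ (⌊D / (δ / 2)⌋₊ + 1 : ℕ) * ∑ x ∈ block l, w l x :=
        sum_sum_le_mul_sum (hw l) (fun j _ => conflictSet_subset f block j l) fun x J hJ hxJ =>
          h.card_le_of_mem_conflictSet hK hf hsep hD hδ₀ hδ
            (fun j hj => Finset.mem_range.mp (hJ hj)) hxJ
    _ ≤ (⌊D / (δ / 2)⌋₊ + 1 : ℕ) * C := by
        gcongr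
        exact hC l (block l)

theorem exists_lipschitzWith_three (h : IsGlidingHump f w δ core block)
    (hf : ∀ n, LipschitzWith 1 (f n)) (hsep : Pairwise fun x y : M => r ≤ dist x y)
    (hδ : δ ≤ r) :
    ∃ g : M → ℝ, LipschitzWith 3 g ∧ (∀ x ∈ core, g x = f 0 x) ∧
      ∀ l, ∀ x ∈ block l, (∀ j < l, x ∉ conflictSet f block j l) → g x = f l x := by
  obtain ⟨g, hg, hgf⟩ := exists_lipschitzWith_eqOn (K := 3) (f := f)
    (B := fun l => {x | (x ∈ block l ∧ ∀ j < l, x ∉ conflictSet f block j l) ∨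
      (l = 0 ∧ x ∈ core)})
    (fun l => ((hf l).weaken (by norm_num)).lipschitzOnWith) fun i j hij x hx y hy => by
      obtain ⟨hyj, hconf⟩ := hy.resolve_right fun hj => by omega
      rw [NNReal.coe_ofNat]
      obtain ⟨hxi, -⟩ | ⟨-, hx⟩ := hx
      · rw [dist_comm, dist_comm x]
        exact not_lt.mp fun hlt => hconf i hij (mem_conflictSet.mpr ⟨hyj, x, hxi, hlt⟩)
      · have hxy : x ≠ y := Finset.disjoint_iff_ne.mp (h.disjoint_core j) x hx y hyj
        have hfj : dist (f j x) (f j y) ≤ dist x y := by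
          simpa only [NNReal.coe_one, one_mul] using (hf j).dist_le_mul x y
        linarith [dist_triangle (f i x) (f j x) (f j y), h.dist_core_le i j x hx, hsep hxy,
          dist_nonneg (x := x) (y := y)]
  exact ⟨g, hg, fun x hx => hgf 0 (.inr ⟨rfl, hx⟩), fun l x hx hl => hgf l (.inl ⟨hx, hl⟩)⟩

lemma sum_mul_dist_le (h : IsGlidingHump f w δ core block) {g : M → ℝ} {B C : ℝ} {l : ℕ}
    (hδ : 0 ≤ δ) (hw : ∀ x, 0 ≤ w l x) (hC : ∀ T : Finset M, ∑ x ∈ T, w l x ≤ C)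
    (hconf : ∑ j ∈ Finset.range l, ∑ x ∈ conflictSet f block j l, w l x ≤ δ)
    (hcore : ∀ x ∈ core, g x = f 0 x)
    (hblock : ∀ x ∈ block l, (∀ j < l, x ∉ conflictSet f block j l) → g x = f l x)
    (hB₀ : 0 ≤ B) (hB : ∀ x, dist (g x) (f l x) ≤ B) (T : Finset M) :
    ∑ x ∈ T, w l x * dist (g x) (f l x) ≤ δ * C + B * (2 * δ) := by
  classical
  let bad := (Finset.range l).biUnion fun j => conflictSet f block j l
  let good := core ∪ block l \ bad
  have hgood : ∀ x ∈ good, dist (g x) (f l x) ≤ δ := fun x hx => by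
    obtain hx | hx := Finset.mem_union.mp hx
    · rw [hcore x hx]
      exact h.dist_core_le 0 l x hx
    · obtain ⟨hxl, hbad⟩ := Finset.mem_sdiff.mp hx
      rw [hblock x hxl fun j hj hxj =>
        hbad (Finset.mem_biUnion.mpr ⟨j, Finset.mem_range.mpr hj, hxj⟩), dist_self]
      exact hδ
  have hrest : ∑ x ∈ T \ good, w l x ≤ 2 * δ := by
    rw [← Finset.sum_inter_add_sum_sdiff (T \ good) bad, two_mul]
    refine add_le_add ?_ (h.sum_outside_le l _ ?_ ?_)
    · calc ∑ x ∈ (T \ good) ∩ bad, w l x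
          ≤ ∑ x ∈ bad, w l x :=
            Finset.sum_le_sum_of_subset_of_nonneg Finset.inter_subset_right fun x _ _ => hw x
        _ ≤ ∑ j ∈ Finset.range l, ∑ x ∈ conflictSet f block j l, w l x :=
            sum_biUnion_le_sum_sum hw
        _ ≤ δ := hconf
    all_goals
      rw [Finset.disjoint_left]
      grind
  calc ∑ x ∈ T, w l x * dist (g x) (f l x)
      ≤ δ * ∑ x ∈ T, w l x + B * ∑ x ∈ T \ good, w l x :=
        sum_mul_le_add_mul_sum_sdiff T hw hδ hgood hB
    _ ≤ δ * C + B * (2 * δ) := by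
        gcongr
        exact hC T

end IsGlidingHump

end Conflicts

lemma exists_nnreal_lt_one_lt_mul {c c' : ℝ} (hc : c < c') : ∃ K : ℝ≥0, K < 1 ∧ c < K * c' := by
  have hlim : Tendsto (fun K : ℝ≥0 => (K : ℝ) * c') (𝓝[<] 1) (𝓝 ((1 : ℝ≥0) * c')) :=
    (Continuous.tendsto (by fun_prop) 1).mono_left nhdsWithin_le_nhds
  rw [NNReal.coe_one, one_mul] at hlim
  have : (𝓝[<] (1 : ℝ≥0)).NeBot := nhdsLT_neBot_of_exists_lt ⟨0, zero_lt_one⟩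
  exact (eventually_mem_nhdsWithin.and (hlim.eventually_const_lt hc)).exists

lemma lipschitzWith_const_mul {M : Type*} [PseudoMetricSpace M] {f : M → ℝ} {L : ℝ≥0}
    (hf : LipschitzWith L f) (K : ℝ≥0) : LipschitzWith (K * L) fun x => K * f x := by
  have hK : LipschitzWith K fun t : ℝ => K * t := by
    simpa only [smul_eq_mul, NNReal.nnnorm_eq] using lipschitzWith_smul (β := ℝ) (K : ℝ)
  exact hK.comp hf

section BoundedSeparated

variable {M : Type*} [PseudoMetricSpace M] {z : M} {r D : ℝ} {K : ℝ≥0}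

lemma abs_le_of_lipschitzWith {f : M → ℝ} (hf : LipschitzWith K f) (hfz : f z = 0)
    (hD : ∀ x y : M, dist x y ≤ D) (x : M) : |f x| ≤ K * D := by
  rw [← sub_zero (f x), ← hfz, ← Real.dist_eq]
  exact (hf.dist_le_mul x z).trans (mul_le_mul_of_nonneg_left (hD x z) K.coe_nonneg)

lemma lipschitzWith_of_abs_le {f : M → ℝ} {b : ℝ} (hsep : Pairwise fun x y : M => r ≤ dist x y)
    (hf : ∀ x, |f x| ≤ b) (hb : 2 * b ≤ K * r) : LipschitzWith K f := by
  refine LipschitzWith.of_dist_le_mul fun x y => ?_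
  obtain rfl | hxy := eq_or_ne x y
  · rw [dist_self, dist_self, mul_zero]
  calc dist (f x) (f y)
      ≤ |f x| + |f y| := by rw [Real.dist_eq]; exact abs_sub _ _
    _ ≤ K * r := by linarith [hf x, hf y]
    _ ≤ K * dist x y := mul_le_mul_of_nonneg_left (hsep hxy) K.coe_nonneg

theorem exists_lipschitzWith_three_frequently_sum_le {f w : ℕ → M → ℝ} {C ε : ℝ} (hr : 0 < r)
    (hsep : Pairwise fun x y : M => r ≤ dist x y) (hD : ∀ x y : M, dist x y ≤ D) (hK : K < 1)
    (hf : ∀ n, LipschitzWith K (f n)) (hfz : ∀ n, f n z = 0) (hw : ∀ n x, 0 ≤ w n x)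
    (hC : ∀ n, ∀ T : Finset M, ∑ x ∈ T, w n x ≤ C) (hε : 0 < ε) :
    ∃ g : M → ℝ, g z = 0 ∧ LipschitzWith 3 g ∧
      ∃ᶠ n in atTop, ∀ T : Finset M, ∑ x ∈ T, w n x * dist (g x) (f n x) ≤ ε := by
  have hK' : (K : ℝ) < 1 := hK
  have hD₀ : 0 ≤ D := dist_nonneg.trans (hD z z)
  have hf1 (n : ℕ) : LipschitzWith 1 (f n) := (hf n).weaken hK.le
  have hfD (n : ℕ) (x : M) : |f n x| ≤ D := by
    simpa only [NNReal.coe_one, one_mul] using abs_le_of_lipschitzWith (hf1 n) (hfz n) hD x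
  obtain ⟨δ, hδr, hδε, hδ₀⟩ : ∃ δ, 2 * δ < (1 - K) * r ∧ δ * C + 4 * D * (2 * δ) < ε ∧ 0 < δ := by
    have hgap : Tendsto (fun δ : ℝ => 2 * δ) (𝓝[>] 0) (𝓝 (2 * 0)) :=
      (Continuous.tendsto (by fun_prop) 0).mono_left nhdsWithin_le_nhds
    have herr : Tendsto (fun δ : ℝ => δ * C + 4 * D * (2 * δ)) (𝓝[>] 0)
        (𝓝 (0 * C + 4 * D * (2 * 0))) :=
      (Continuous.tendsto (by fun_prop) 0).mono_left nhdsWithin_le_nhds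
    simp only [mul_zero, zero_mul, add_zero] at hgap herr
    exact ((hgap.eventually_lt_const (mul_pos (sub_pos.mpr hK') hr)).and
      ((herr.eventually_lt_const hε).and self_mem_nhdsWithin)).exists
  obtain ⟨φ, core, block, hφ, hz, hhump⟩ := exists_isGlidingHump z hfD hw hC hδ₀
  obtain ⟨s, hs, hconf⟩ := hhump.exists_strictMono_sum_conflictSet_le hK.le (fun n => hf _) hsep hD
    hδ₀ hδr.le (fun n => hw _) (fun n => hC _) hδ₀
  have hhump_s := hhump.comp_strictMono hs
  obtain ⟨g, hg, hcore, hblock⟩ :=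
    hhump_s.exists_lipschitzWith_three (fun n => hf1 _) hsep (by nlinarith [K.coe_nonneg])
  have hgz : g z = 0 := (hcore z hz).trans (hfz _)
  have hdist (n : ℕ) (x : M) : dist (g x) (f n x) ≤ 4 * D := by
    have hgD : |g x| ≤ 3 * D := by
      simpa only [NNReal.coe_ofNat] using abs_le_of_lipschitzWith hg hgz hD x
    rw [Real.dist_eq]
    linarith [abs_sub (g x) (f n x), hfD n x]
  refine ⟨g, hgz, hg, (hφ.comp hs).tendsto_atTop.frequently (.of_forall fun l T => ?_)⟩
  exact (hhump_s.sum_mul_dist_le hδ₀.le (hw _) (hC _) (hconf l) hcore (hblock l)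
    (by positivity) (hdist _) T).trans hδε.le

end BoundedSeparated

section FreeNorm

lemma summable_mul_of_abs_le {α : Type*} {μ f : α → ℝ} {B : ℝ} (hμ : Summable fun x => |μ x|)
    (hf : ∀ x, |f x| ≤ B) : Summable fun x => μ x * f x :=
  Summable.of_norm_bounded (hμ.mul_right B) fun x => by
    rw [Real.norm_eq_abs, abs_mul]
    exact mul_le_mul_of_nonneg_left (hf x) (abs_nonneg _)

lemma tsum_mul_const_mul {α : Type*} (μ f : α → ℝ) (a : ℝ) :
    ∑' x, μ x * (a * f x) = a * ∑' x, μ x * f x :=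
  (tsum_congr fun x => mul_left_comm (μ x) a (f x)).trans tsum_mul_left

lemma tsum_mul_sub_tsum_mul_le {α : Type*} {z : α} {μ f g : α → ℝ} {ε : ℝ}
    (hμf : Summable fun x => μ x * f x) (hμg : Summable fun x => μ x * g x) (hfg : f z = g z)
    (hε : ∀ T : Finset α, ∑ x ∈ T, ({z}ᶜ : Set α).indicator (|μ ·|) x * dist (g x) (f x) ≤ ε) :
    ∑' x, μ x * f x - ∑' x, μ x * g x ≤ ε := by
  rw [← hμf.tsum_sub hμg]
  refine (hμf.sub hμg).tsum_le_of_sum_le fun T => (Finset.sum_le_sum fun x _ => ?_).trans (hε T)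
  obtain rfl | hx := eq_or_ne x z
  · rw [hfg, sub_self, dist_self, mul_zero]
  · rw [Set.indicator_of_mem (by exact hx), ← mul_sub, dist_comm, Real.dist_eq, ← abs_mul]
    exact le_abs_self _

variable {M : Type*} [MetricSpace M] {z : M} {r D : ℝ} {μ : M → ℝ}

lemma isLUB_freeNormSummable (hD : ∀ x y : M, dist x y ≤ D) (hμ : Summable fun x => |μ x|) :
    IsLUB {s | ∃ f : M → ℝ, f z = 0 ∧ LipschitzWith 1 f ∧ s = ∑' x, μ x * f x}
      (freeNormSummable z μ) := by
  refine isLUB_csSup ⟨_, 0, rfl, LipschitzWith.const' 0, rfl⟩ ⟨∑' x, |μ x| * D, ?_⟩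
  rintro _ ⟨f, hfz, hf, rfl⟩
  have hfD (x : M) : |f x| ≤ D := by
    simpa only [NNReal.coe_one, one_mul] using abs_le_of_lipschitzWith hf hfz hD x
  refine (summable_mul_of_abs_le hμ hfD).tsum_le_tsum (fun x => ?_) (hμ.mul_right D)
  calc μ x * f x
      ≤ |μ x| * |f x| := (le_abs_self _).trans_eq (abs_mul _ _)
    _ ≤ |μ x| * D := mul_le_mul_of_nonneg_left (hfD x) (abs_nonneg _)

lemma tsum_mul_le_freeNormSummable (hD : ∀ x y : M, dist x y ≤ D) (hμ : Summable fun x => |μ x|)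
    {f : M → ℝ} (hfz : f z = 0) (hf : LipschitzWith 1 f) :
    ∑' x, μ x * f x ≤ freeNormSummable z μ :=
  (isLUB_freeNormSummable hD hμ).1 ⟨f, hfz, hf, rfl⟩

lemma freeNormSummable_nonneg (hD : ∀ x y : M, dist x y ≤ D) (hμ : Summable fun x => |μ x|) :
    0 ≤ freeNormSummable z μ := by
  simpa using tsum_mul_le_freeNormSummable hD hμ (Pi.zero_apply z) (LipschitzWith.const' 0)

lemma exists_lt_tsum_mul_of_lt_freeNormSummable (hD : ∀ x y : M, dist x y ≤ D)
    (hμ : Summable fun x => |μ x|) {c : ℝ} (hc : c < freeNormSummable z μ) :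
    ∃ f : M → ℝ, f z = 0 ∧ LipschitzWith 1 f ∧ c < ∑' x, μ x * f x := by
  obtain ⟨_, ⟨f, hfz, hf, rfl⟩, hcf⟩ := (lt_isLUB_iff (isLUB_freeNormSummable hD hμ)).mp hc
  exact ⟨f, hfz, hf, hcf⟩

lemma tsum_mul_le_mul_freeNormSummable (hD : ∀ x y : M, dist x y ≤ D)
    (hμ : Summable fun x => |μ x|) {K : ℝ≥0} (hK : K ≠ 0) {g : M → ℝ} (hgz : g z = 0)
    (hg : LipschitzWith K g) : ∑' x, μ x * g x ≤ K * freeNormSummable z μ := by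
  have hscaled : LipschitzWith 1 fun x => (K⁻¹ : ℝ≥0) * g x := by
    simpa only [inv_mul_cancel₀ hK] using lipschitzWith_const_mul hg K⁻¹
  have hle := tsum_mul_le_freeNormSummable hD hμ (by rw [hgz, mul_zero]) hscaled
  rw [tsum_mul_const_mul, NNReal.coe_inv] at hle
  exact (inv_mul_le_iff₀ (NNReal.coe_pos.mpr hK.bot_lt)).mp hle

lemma sum_indicator_abs_le_freeNormSummable (hD : ∀ x y : M, dist x y ≤ D)
    (hμ : Summable fun x => |μ x|) (hr : 0 < r) (hsep : Pairwise fun x y : M => r ≤ dist x y)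
    (T : Finset M) :
    ∑ x ∈ T, ({z}ᶜ : Set M).indicator (|μ ·|) x ≤ 2 / r * freeNormSummable z μ := by
  let s : M → ℝ := fun x => r / 2 * SignType.sign (μ x)
  let f : M → ℝ := (T ∩ {z}ᶜ : Set M).indicator s
  have hf (x : M) : |f x| ≤ r / 2 := by
    refine (norm_indicator_le_norm_self s x).trans ?_
    obtain hx | hx | hx := lt_trichotomy (μ x) 0 <;> simp [s, hx, abs_of_pos hr, (half_pos hr).le]
  have hfT (x : M) (hx : x ∉ T) : f x = 0 := Set.indicator_of_notMem (fun hx' => hx hx'.1) s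
  have hfz : f z = 0 := Set.indicator_of_notMem (fun hz => hz.2 rfl) s
  have hμf (x : M) (hx : x ∈ T) : μ x * f x = r / 2 * ({z}ᶜ : Set M).indicator (|μ ·|) x := by
    obtain rfl | hxz := eq_or_ne x z
    · simp [hfz]
    · have hfx : f x = s x := Set.indicator_of_mem (Set.mem_inter hx hxz) s
      rw [hfx, Set.indicator_of_mem (by exact hxz), mul_left_comm, self_mul_sign]
  have hle := tsum_mul_le_freeNormSummable hD hμ hfz
    (lipschitzWith_of_abs_le hsep hf (by rw [NNReal.coe_one]; linarith))
  rw [tsum_eq_sum fun x hx => by rw [hfT x hx, mul_zero], Finset.sum_congr rfl hμf,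
    ← Finset.mul_sum] at hle
  rwa [← inv_div, ← div_eq_inv_mul, le_div_iff₀' (half_pos hr)]

theorem exists_lipschitzWith_three_frequently_le_tsum_mul {μ f : ℕ → M → ℝ} {C a b : ℝ}
    (hr : 0 < r) (hsep : Pairwise fun x y : M => r ≤ dist x y) (hD : ∀ x y : M, dist x y ≤ D)
    (hμ : ∀ n, Summable fun x => |μ n x|) (hC : ∀ n, freeNormSummable z (μ n) ≤ C)
    (hfz : ∀ n, f n z = 0) (hf : ∀ n, LipschitzWith 1 (f n)) (ha : ∀ n, a ≤ ∑' x, μ n x * f n x)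
    (hba : b < a) :
    ∃ g : M → ℝ, g z = 0 ∧ LipschitzWith 3 g ∧ ∃ᶠ n in atTop, b ≤ ∑' x, μ n x * g x := by
  obtain ⟨K, hK, hKb⟩ := exists_nnreal_lt_one_lt_mul hba
  have hKf (n : ℕ) : LipschitzWith K fun x => K * f n x := by
    simpa only [mul_one] using lipschitzWith_const_mul (hf n) K
  have hKfz (n : ℕ) : K * f n z = 0 := by rw [hfz, mul_zero]
  obtain ⟨g, hgz, hg, hgf⟩ := exists_lipschitzWith_three_frequently_sum_le
    (w := fun n => ({z}ᶜ : Set M).indicator (|μ n ·|)) hr hsep hD hK hKf hKfz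
    (fun n => Set.indicator_nonneg fun x _ => abs_nonneg _)
    (fun n T => (sum_indicator_abs_le_freeNormSummable hD (hμ n) hr hsep T).trans <|
      mul_le_mul_of_nonneg_left (hC n) (by positivity)) (sub_pos.mpr hKb)
  refine ⟨g, hgz, hg, hgf.mono fun n hn => ?_⟩
  have hloss : ∑' x, μ n x * (K * f n x) - ∑' x, μ n x * g x ≤ K * a - b :=
    tsum_mul_sub_tsum_mul_le
      (summable_mul_of_abs_le (hμ n) (abs_le_of_lipschitzWith (hKf n) (hKfz n) hD))
      (summable_mul_of_abs_le (hμ n) (abs_le_of_lipschitzWith hg hgz hD))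
      ((hKfz n).trans hgz.symm) hn
  rw [tsum_mul_const_mul] at hloss
  linarith [mul_le_mul_of_nonneg_left (ha n) K.coe_nonneg]

theorem exists_three_lipschitz_of_limsup_gt_general (z : M) (hr : 0 < r)
    (hsep : Pairwise fun x y : M => r ≤ dist x y) (hD : ∀ x y : M, dist x y ≤ D)
    (μ : ℕ → M → ℝ) (hsumm : ∀ n, Summable fun x => |μ n x|)
    (hbdd : ∃ C : ℝ, ∀ n, freeNormSummable z (μ n) ≤ C) (c : ℝ)
    (hlim : c < limsup (fun n => freeNormSummable z (μ n)) atTop) :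
    ∃ g : M → ℝ, g z = 0 ∧ LipschitzWith 3 g ∧
      c < limsup (fun n => ∑' x : M, μ n x * g x) atTop := by
  obtain ⟨C, hC⟩ := hbdd
  obtain ⟨b, hcb, hb⟩ := exists_between hlim
  obtain ⟨a, hba, ha⟩ := exists_between hb
  have hfreq : ∃ᶠ n in atTop, a < freeNormSummable z (μ n) :=
    frequently_lt_of_lt_limsup
      (isCoboundedUnder_le_of_le atTop fun n => freeNormSummable_nonneg hD (hsumm n)) ha
  obtain ⟨φ, hφ, hφa⟩ := extraction_of_frequently_atTop hfreq
  choose f hfz hf hfa using fun n =>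
    exists_lt_tsum_mul_of_lt_freeNormSummable hD (hsumm (φ n)) (hφa n)
  obtain ⟨g, hgz, hg, hgb⟩ := exists_lipschitzWith_three_frequently_le_tsum_mul hr hsep hD
    (fun n => hsumm (φ n)) (fun n => hC (φ n)) hfz hf (fun n => (hfa n).le) hba
  have hbound (n : ℕ) : ∑' x, μ n x * g x ≤ (3 : ℝ≥0) * C :=
    (tsum_mul_le_mul_freeNormSummable hD (hsumm n) three_ne_zero hgz hg).trans
      (mul_le_mul_of_nonneg_left (hC n) NNReal.zero_le_coe)
  exact ⟨g, hgz, hg, hcb.trans_le <| le_limsup_of_frequently_le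
    (hφ.tendsto_atTop.frequently hgb) (isBoundedUnder_of ⟨_, hbound⟩)⟩

end FreeNorm

/-- For a metric taking only the values `0, 1, …, N` and a bounded sequence `(μ_n)` of
summable functions with `limsup ‖μ_n‖ > c > 0`, there is a `3`-Lipschitz function `g`
vanishing at the base point with `limsup ⟨μ_n, g⟩ > c`. -/
theorem exists_three_lipschitz_of_limsup_gt
    {M : Type*} [MetricSpace M] (z : M) (N : ℕ)
    (hint : ∀ x y : M, ∃ k : ℕ, k ≤ N ∧ dist x y = k)
    (μ : ℕ → M → ℝ) (hsumm : ∀ n, Summable fun x => |μ n x|)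
    (hbdd : ∃ C : ℝ, ∀ n, freeNormSummable z (μ n) ≤ C)
    (c : ℝ) (hc : 0 < c)
    (hlim : c < limsup (fun n => freeNormSummable z (μ n)) atTop) :
    ∃ g : M → ℝ, g z = 0 ∧ LipschitzWith 3 g ∧
      c < limsup (fun n => ∑' x : M, μ n x * g x) atTop := by
  have hsep : Pairwise fun x y : M => (1 : ℝ) ≤ dist x y := fun x y hxy => by
    obtain ⟨k, -, hk⟩ := hint x y
    rw [hk, Nat.one_le_cast, Nat.one_le_iff_ne_zero, ← Nat.cast_ne_zero (R := ℝ), ← hk]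
    exact dist_ne_zero.mpr hxy
  have hN (x y : M) : dist x y ≤ N := by
    obtain ⟨k, hkN, hk⟩ := hint x y
    rw [hk]
    exact_mod_cast hkN
  exact exists_three_lipschitz_of_limsup_gt_general z one_pos hsep hN μ hsumm hbdd c hlim
end
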